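/- arXiv:2508.12113 — 7 statements merged into one kernel-verified Lean document; each statement's English description precedes it below -/
import Mathlib

section
/- Let K have characteristic zero and let A = A(f_A) be a hyperplane arrangement of d ≥ 2 hyperplanes in ℙⁿ. For a general linear form ℓ, the pair f_A, ∂f_A/∂ℓ is a regular sequence in S (so (f_A, ∂f_A/∂ℓ) is a complete intersection of codimension 2), and there is an equality of ideals (f_A, ∂f_A/∂ℓ) = ⋂_{P ∈ S(A)} (g_P, ∂g_P/∂ℓ), where each (g_P, ∂g_P/∂ℓ) is a primary ideal whose radical is I_P; this is the minimal primary decomposition of (f_A, ∂f_A/∂ℓ). -/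
open MvPolynomial

/-- The derivative `∂f/∂ℓ = Σᵢ aᵢ·∂f/∂xᵢ` of `f` in the direction of the linear form
`ℓ = Σᵢ aᵢxᵢ` with coefficient vector `a`. -/
noncomputable def lderiv {K : Type*} [CommRing K] {m : ℕ} (a : Fin m → K)
    (f : MvPolynomial (Fin m) K) : MvPolynomial (Fin m) K :=
  ∑ i, a i • pderiv i f

/-- The top support `S(A)` of the singular locus of the arrangement defined by the linear
forms `L i`: the (ideals of the) codimension-two subspaces cut out by two distinct
hyperplanes of the arrangement; `I_P = (L i, L j)`. -/
def singSupp {K : Type*} [CommRing K] {m d : ℕ} (L : Fin d → MvPolynomial (Fin m) K) :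
    Set (Ideal (MvPolynomial (Fin m) K)) :=
  {I | ∃ i j : Fin d, i ≠ j ∧ I = Ideal.span {L i, L j}}

open Classical in
/-- `g_P`: the product of the linear factors of `f_A = Π L i` that lie in `I_P`. -/
noncomputable def gOf {K : Type*} [CommRing K] {m d : ℕ}
    (L : Fin d → MvPolynomial (Fin m) K) (P : Ideal (MvPolynomial (Fin m) K)) :
    MvPolynomial (Fin m) K :=
  ∏ i ∈ Finset.univ.filter (fun i => L i ∈ P), L i


section helpers

variable {K : Type*} [Field K] {m : ℕ}

theorem arr_lderiv_mul (a : Fin m → K) (f g : MvPolynomial (Fin m) K) :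
    lderiv a (f * g) = f * lderiv a g + g * lderiv a f := by
  simp only [lderiv, Derivation.leibniz, smul_add, Finset.sum_add_distrib, Finset.mul_sum,
    smul_eq_mul, mul_smul_comm]

theorem arr_lin {f : MvPolynomial (Fin m) K} (hf : f.IsHomogeneous 1) :
    ∃ l : Fin m → K, f = ∑ k, C (l k) * X k := by
  have h : f ∈ homogeneousSubmodule (Fin m) K 1 := hf
  rw [homogeneousSubmodule_one_eq_span_X, Submodule.mem_span_range_iff_exists_fun] at h
  obtain ⟨c, hc⟩ := h
  exact ⟨c, by rw [← hc]; simp [smul_eq_C_mul]⟩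

theorem arr_pderiv_lin (l : Fin m → K) (k : Fin m) :
    pderiv k (∑ j, C (l j) * X j : MvPolynomial (Fin m) K) = C (l k) := by
  rw [map_sum, Finset.sum_eq_single k]
  · simp
  · intro b _ hb
    simp [pderiv_X_of_ne hb]
  · simp

theorem arr_lderiv_lin {f : MvPolynomial (Fin m) K} (hf : f.IsHomogeneous 1) (a : Fin m → K) :
    lderiv a f = C (eval a f) := by
  obtain ⟨l, rfl⟩ := arr_lin hf
  simp only [lderiv, arr_pderiv_lin]
  simp only [smul_eq_C_mul, map_sum, map_mul, eval_C, eval_X]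
  exact Finset.sum_congr rfl fun _ _ => mul_comm _ _

theorem arr_const {f u v : MvPolynomial (Fin m) K} (hf : f.IsHomogeneous 1)
    (hu : u.IsHomogeneous 1) (hv : v.IsHomogeneous 1) (h : f ∈ Ideal.span {u, v}) :
    ∃ α β : K, f = C α * u + C β * v := by
  obtain ⟨A, B, hAB⟩ := Ideal.mem_span_pair.1 h
  obtain ⟨l, hl⟩ := arr_lin hf
  obtain ⟨p, hp⟩ := arr_lin hu
  obtain ⟨q, hq⟩ := arr_lin hv
  refine ⟨constantCoeff A, constantCoeff B, ?_⟩
  have hu0 : constantCoeff u = 0 := by rw [hp]; simp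
  have hv0 : constantCoeff v = 0 := by rw [hq]; simp
  have key : ∀ k, l k = constantCoeff A * p k + constantCoeff B * q k := by
    intro k
    have h1 := congrArg (fun F => constantCoeff (pderiv k F)) hAB
    simp only [map_add, Derivation.leibniz, smul_eq_mul, map_mul, hu0, hv0] at h1
    rw [hl, hp, hq] at h1
    simp only [arr_pderiv_lin, constantCoeff_C] at h1
    rw [← h1]; ring
  rw [hl, hp, hq, Finset.mul_sum, Finset.mul_sum, ← Finset.sum_add_distrib]
  refine Finset.sum_congr rfl fun k _ => ?_
  rw [key k]; simp only [map_add, map_mul]; ring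

theorem arr_span_eq {f g u v : MvPolynomial (Fin m) K} (hf : f.IsHomogeneous 1)
    (hg : g.IsHomogeneous 1)
    (hu : u.IsHomogeneous 1) (hv : v.IsHomogeneous 1) (h : f ∈ Ideal.span {u, v})
    (h' : g ∈ Ideal.span {u, v}) (hfg : ∀ c : K, f ≠ c • g) (hgf : ∀ c : K, g ≠ c • f) :
    Ideal.span {f, g} = Ideal.span {u, v} := by
  apply le_antisymm
  · rw [Ideal.span_le]; rintro x (rfl | rfl) <;> assumption
  obtain ⟨α, β, e1⟩ := arr_const hf hu hv h
  obtain ⟨γ, δ, e2⟩ := arr_const hg hu hv h'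
  have hdet : α * δ - β * γ ≠ 0 := by
    intro h0
    have h0' : (C α * C δ - C β * C γ : MvPolynomial (Fin m) K) = 0 := by
      rw [← C_mul, ← C_mul, ← C_sub, h0, C_0]
    by_cases hδ : δ = 0
    · by_cases hγ : γ = 0
      · apply hgf 0
        rw [e2, hδ, hγ]; simp
      · apply hfg (α / γ)
        have hc : (C γ * C γ⁻¹ : MvPolynomial (Fin m) K) = 1 := by
          rw [← C_mul, mul_inv_cancel₀ hγ, C_1]
        rw [smul_eq_C_mul, div_eq_mul_inv, C_mul, e1, e2]
        linear_combination (-C β * v) * hc - v * C γ⁻¹ * h0' + (-C α * u) * hc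
    · apply hfg (β / δ)
      have hc : (C δ * C δ⁻¹ : MvPolynomial (Fin m) K) = 1 := by
        rw [← C_mul, mul_inv_cancel₀ hδ, C_1]
      rw [smul_eq_C_mul, div_eq_mul_inv, C_mul, e1, e2]
      linear_combination (-C β * v) * hc + u * C δ⁻¹ * h0' + (-C α * u) * hc
  have hc : ((C α * C δ - C β * C γ) * C (α * δ - β * γ)⁻¹ : MvPolynomial (Fin m) K) = 1 := by
    rw [← C_mul, ← C_mul, ← C_sub, ← C_mul, mul_inv_cancel₀ hdet, C_1]
  rw [Ideal.span_le]
  rintro x (rfl | rfl)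
  · refine Ideal.mem_span_pair.2 ⟨C (α * δ - β * γ)⁻¹ * C δ, - C (α * δ - β * γ)⁻¹ * C β, ?_⟩
    rw [e1, e2]; linear_combination x * hc
  · refine Ideal.mem_span_pair.2 ⟨- C (α * δ - β * γ)⁻¹ * C γ, C (α * δ - β * γ)⁻¹ * C α, ?_⟩
    rw [e1, e2]; linear_combination x * hc

theorem arr_prime_of_retract (P : Ideal (MvPolynomial (Fin m) K))
    (φ : MvPolynomial (Fin m) K →ₐ[K] MvPolynomial (Fin m) K)
    (h1 : ∀ k, X k - φ (X k) ∈ P) (h2 : ∀ x ∈ P, φ x = 0) : P.IsPrime := by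
  have h3 : ∀ x, x - φ x ∈ P := by
    have : (Ideal.Quotient.mkₐ K P) = (Ideal.Quotient.mkₐ K P).comp φ := by
      apply MvPolynomial.algHom_ext
      intro k
      simpa using (Ideal.Quotient.eq.2 (h1 k))
    intro x
    rw [← Ideal.Quotient.eq]
    simpa using DFunLike.congr_fun this x
  have : P = RingHom.ker φ := by
    ext x
    rw [RingHom.mem_ker]
    refine ⟨h2 x, fun h => ?_⟩
    simpa [h] using h3 x
  rw [this]
  exact RingHom.ker_isPrime _

theorem arr_aeval_shift {f : MvPolynomial (Fin m) K} (hf : f.IsHomogeneous 1)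
    (w w' : Fin m → K) (u v : MvPolynomial (Fin m) K) :
    aeval (fun k => X k - C (w k) * u - C (w' k) * v) f
      = f - C (eval w f) * u - C (eval w' f) * v := by
  obtain ⟨l, rfl⟩ := arr_lin hf
  simp only [map_sum, map_mul, aeval_X, eval_C, eval_X, aeval_C, algebraMap_eq, Finset.sum_mul,
    ← Finset.sum_sub_distrib]
  exact Finset.sum_congr rfl fun k _ => by ring

theorem arr_dual [CharZero K] {u v : MvPolynomial (Fin m) K} (hu : u.IsHomogeneous 1)
    (hv : v.IsHomogeneous 1) (hu0 : u ≠ 0) (huv : ∀ c : K, v ≠ c • u) :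
    ∃ w : Fin m → K, eval w u = 0 ∧ eval w v = 1 := by
  obtain ⟨a, ha⟩ : ∃ a, eval a u ≠ 0 := by
    by_contra! h
    exact hu0 (MvPolynomial.funext fun x => by simpa using h x)
  obtain ⟨b, hb⟩ : ∃ b, eval b v ≠ (eval a v / eval a u) * eval b u := by
    by_contra! h
    exact huv (eval a v / eval a u) (MvPolynomial.funext fun x => by
      simpa [smul_eval] using h x)
  have lin : ∀ f : MvPolynomial (Fin m) K, f.IsHomogeneous 1 → ∀ s t : K,
      eval (fun k => s * (b k - t * a k)) f = s * (eval b f - t * eval a f) := by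
    intro f hf s t
    obtain ⟨l, rfl⟩ := arr_lin hf
    simp only [map_sum, map_mul, eval_C, eval_X, Finset.mul_sum, ← Finset.sum_sub_distrib]
    exact Finset.sum_congr rfl fun k _ => by ring
  have hne : eval b v - eval b u / eval a u * eval a v ≠ 0 := by
    intro h; apply hb; rw [sub_eq_zero.1 h]; ring
  refine ⟨fun k => (eval b v - eval b u / eval a u * eval a v)⁻¹ *
    (b k - eval b u / eval a u * a k), ?_, ?_⟩
  · rw [lin u hu, div_mul_cancel₀ _ ha]; simp
  · rw [lin v hv, inv_mul_cancel₀ hne]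

theorem arr_prime_pair [CharZero K] {u v : MvPolynomial (Fin m) K} (hu : u.IsHomogeneous 1)
    (hv : v.IsHomogeneous 1) (hu0 : u ≠ 0) (hv0 : v ≠ 0) (huv : ∀ c : K, u ≠ c • v)
    (hvu : ∀ c : K, v ≠ c • u) : (Ideal.span {u, v}).IsPrime := by
  obtain ⟨w, hw1, hw2⟩ := arr_dual hv hu hv0 huv
  obtain ⟨w', hw1', hw2'⟩ := arr_dual hu hv hu0 hvu
  apply arr_prime_of_retract _ (aeval (fun k => X k - C (w k) * u - C (w' k) * v))
  · intro k
    rw [aeval_X]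
    exact Ideal.mem_span_pair.2 ⟨C (w k), C (w' k), by ring⟩
  · intro x hx
    obtain ⟨A, B, rfl⟩ := Ideal.mem_span_pair.1 hx
    rw [map_add, map_mul, map_mul, arr_aeval_shift hu, arr_aeval_shift hv, hw1, hw2, hw1', hw2']
    simp

theorem arr_prime_single [CharZero K] {u : MvPolynomial (Fin m) K} (hu : u.IsHomogeneous 1)
    (hu0 : u ≠ 0) : Prime u := by
  rw [← Ideal.span_singleton_prime hu0]
  obtain ⟨a, ha⟩ : ∃ a, eval a u ≠ 0 := by
    by_contra! h
    exact hu0 (MvPolynomial.funext fun x => by simpa using h x)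
  apply arr_prime_of_retract _
    (aeval (fun k => X k - C (a k) * (C (eval a u)⁻¹ * u) - C (0 : K) * 0))
  · intro k
    rw [aeval_X, Ideal.mem_span_singleton]
    exact ⟨C (a k) * C (eval a u)⁻¹, by ring⟩
  · intro x hx
    obtain ⟨A, rfl⟩ := Ideal.mem_span_singleton.1 hx
    rw [map_mul, arr_aeval_shift hu a (fun _ => 0), ← mul_assoc, ← C_mul, mul_inv_cancel₀ ha]
    simp

theorem arr_nz_step {R : Type*} [CommRing R] {s a b h : R}
    (hreg : ∀ z, h ∣ a * z → h ∣ z)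
    (ha : ∀ x, s * x ∈ Ideal.span {a, h} → x ∈ Ideal.span {a, h})
    (hb : ∀ x, s * x ∈ Ideal.span {b, h} → x ∈ Ideal.span {b, h}) :
    ∀ x, s * x ∈ Ideal.span {a * b, h} → x ∈ Ideal.span {a * b, h} := by
  intro x hx
  obtain ⟨α, β, e⟩ := Ideal.mem_span_pair.1 hx
  obtain ⟨y, γ, e'⟩ := Ideal.mem_span_pair.1
    (ha x (Ideal.mem_span_pair.2 ⟨α * b, β, by rw [← e]; ring⟩))
  obtain ⟨δ, hδ⟩ := hreg (s * y - α * b) ⟨β - s * γ, by linear_combination s * e' - e⟩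
  obtain ⟨ε, ζ, e''⟩ := Ideal.mem_span_pair.1
    (hb y (Ideal.mem_span_pair.2 ⟨α, δ, by linear_combination (-1) * hδ⟩))
  exact Ideal.mem_span_pair.2 ⟨ε, a * ζ + γ, by linear_combination e' + a * e''⟩

theorem arr_nz_prod {R ι : Type*} [CommRing R] [IsDomain R] {s h : R} (U : Finset ι)
    (p : ι → R) (hp : ∀ i ∈ U, Prime (p i)) (hdvd : ∀ i ∈ U, ¬ p i ∣ h)
    (hs : ∀ i ∈ U, ∀ x, s * x ∈ Ideal.span {p i, h} → x ∈ Ideal.span {p i, h}) :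
    ∀ x, s * x ∈ Ideal.span {∏ i ∈ U, p i, h} → x ∈ Ideal.span {∏ i ∈ U, p i, h} := by
  classical
  induction U using Finset.induction_on with
  | empty =>
    intro x _
    exact Ideal.mem_span_pair.2 ⟨x, 0, by simp⟩
  | insert i U hi ih =>
    rw [Finset.prod_insert hi]
    apply arr_nz_step
    · rintro z ⟨w, hw⟩
      have hpi := hp i (Finset.mem_insert_self _ _)
      rcases hpi.dvd_or_dvd ⟨z, hw.symm⟩ with h1 | ⟨w', rfl⟩
      · exact absurd h1 (hdvd i (Finset.mem_insert_self _ _))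
      · exact ⟨w', mul_left_cancel₀ hpi.ne_zero (by rw [hw]; ring)⟩
    · exact hs i (Finset.mem_insert_self _ _)
    · exact ih (fun j hj => hp j (Finset.mem_insert_of_mem hj))
        (fun j hj => hdvd j (Finset.mem_insert_of_mem hj))
        (fun j hj => hs j (Finset.mem_insert_of_mem hj))

theorem arr_lderiv_prod {ι : Type*} [DecidableEq ι] (a : Fin m → K)
    (L : ι → MvPolynomial (Fin m) K)
    (T : Finset ι) {i : ι} (hi : i ∈ T) (hhom : (L i).IsHomogeneous 1) :
    lderiv a (∏ j ∈ T, L j) = L i * lderiv a (∏ j ∈ T.erase i, L j)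
      + C (eval a (L i)) * ∏ j ∈ T.erase i, L j := by
  rw [← Finset.mul_prod_erase T L hi, arr_lderiv_mul, arr_lderiv_lin hhom]
  ring

section arrangement

variable [CharZero K] {ι : Type*} {L : ι → MvPolynomial (Fin m) K}

theorem arr_not_dvd (hhom : ∀ i, (L i).IsHomogeneous 1)
    (hprop : ∀ i j, i ≠ j → ∀ c : K, L i ≠ c • L j) {i j : ι} (hij : i ≠ j) :
    ¬ L i ∣ L j := by
  rintro ⟨q, hq⟩
  obtain ⟨α, β, e⟩ := arr_const (hhom j) (hhom i) (hhom i)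
    (Ideal.mem_span_pair.2 ⟨q, 0, by rw [hq]; ring⟩)
  apply hprop j i hij.symm (α + β)
  rw [e, smul_eq_C_mul, C_add, add_mul]

theorem arr_not_dvd_lderiv (hhom : ∀ i, (L i).IsHomogeneous 1) (hne : ∀ i, L i ≠ 0)
    (hprop : ∀ i j, i ≠ j → ∀ c : K, L i ≠ c • L j) (a : Fin m → K)
    (ha : ∀ i, eval a (L i) ≠ 0) (T : Finset ι) {i : ι} (hi : i ∈ T) :
    ¬ L i ∣ lderiv a (∏ j ∈ T, L j) := by
  classical
  have hp := arr_prime_single (hhom i) (hne i)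
  rw [arr_lderiv_prod a L T hi (hhom i), dvd_add_right (dvd_mul_right _ _)]
  intro h
  rcases hp.dvd_or_dvd h with h | h
  · exact hp.not_isUnit (isUnit_of_dvd_unit h ((isUnit_iff_ne_zero.2 (ha i)).map C))
  · obtain ⟨j, hj, hd⟩ := hp.exists_mem_finset_dvd h
    exact arr_not_dvd hhom hprop (Finset.ne_of_mem_erase hj).symm hd

theorem arr_span_lderiv (hhom : ∀ i, (L i).IsHomogeneous 1) [DecidableEq ι] (a : Fin m → K)
    (ha : ∀ i, eval a (L i) ≠ 0) (T : Finset ι) {i : ι} (hi : i ∈ T) :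
    Ideal.span {L i, lderiv a (∏ j ∈ T, L j)} = Ideal.span {∏ j ∈ T.erase i, L j, L i} := by
  have hc : (C (eval a (L i)) * C (eval a (L i))⁻¹ : MvPolynomial (Fin m) K) = 1 := by
    rw [← C_mul, mul_inv_cancel₀ (ha i), C_1]
  have e := arr_lderiv_prod a L T hi (hhom i)
  apply le_antisymm <;> rw [Ideal.span_le] <;> rintro x (rfl | rfl)
  · exact Ideal.subset_span (by simp)
  · exact Ideal.mem_span_pair.2 ⟨C (eval a (L i)), lderiv a (∏ j ∈ T.erase i, L j), by rw [e]; ring⟩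
  · refine Ideal.mem_span_pair.2 ⟨- C (eval a (L i))⁻¹ * lderiv a (∏ j ∈ T.erase i, L j),
      C (eval a (L i))⁻¹, ?_⟩
    rw [e]; linear_combination (∏ j ∈ T.erase i, L j) * hc
  · exact Ideal.subset_span (by simp)

/-- Elements outside all `(L i, L j)` are nonzerodivisors modulo `(g, ∂g/∂ℓ)`. -/
theorem arr_nzd (hhom : ∀ i, (L i).IsHomogeneous 1) (hne : ∀ i, L i ≠ 0)
    (hprop : ∀ i j, i ≠ j → ∀ c : K, L i ≠ c • L j) (a : Fin m → K)
    (ha : ∀ i, eval a (L i) ≠ 0) (T : Finset ι) (s : MvPolynomial (Fin m) K)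
    (hs : ∀ i ∈ T, ∀ j ∈ T, i ≠ j → s ∉ Ideal.span {L i, L j}) :
    ∀ x, s * x ∈ Ideal.span {∏ j ∈ T, L j, lderiv a (∏ j ∈ T, L j)} →
      x ∈ Ideal.span {∏ j ∈ T, L j, lderiv a (∏ j ∈ T, L j)} := by
  classical
  apply arr_nz_prod T L (fun i _ => arr_prime_single (hhom i) (hne i))
    (fun i hi => arr_not_dvd_lderiv hhom hne hprop a ha T hi)
  intro i hi
  rw [arr_span_lderiv hhom a ha T hi]
  apply arr_nz_prod (T.erase i) L (fun i _ => arr_prime_single (hhom i) (hne i))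
    (fun j hj => arr_not_dvd hhom hprop (Finset.ne_of_mem_erase hj))
  intro j hj x hx
  have hji := Finset.ne_of_mem_erase hj
  have hP := arr_prime_pair (hhom j) (hhom i) (hne j) (hne i) (hprop j i hji)
    (hprop i j hji.symm)
  exact (hP.mem_or_mem hx).resolve_left (hs j (Finset.mem_of_mem_erase hj) i hi hji)

theorem arr_lderiv_mem (hhom : ∀ i, (L i).IsHomogeneous 1) (a : Fin m → K)
    (T : Finset ι) {i j : ι} (hi : i ∈ T) (hj : j ∈ T) (hij : i ≠ j) :
    Ideal.span {∏ k ∈ T, L k, lderiv a (∏ k ∈ T, L k)} ≤ Ideal.span {L i, L j} := by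
  classical
  have h1 : L i ∈ Ideal.span {L i, L j} := Ideal.subset_span (by simp)
  have h2 : L j ∈ Ideal.span {L i, L j} := Ideal.subset_span (by simp)
  rw [Ideal.span_le]
  rintro x (rfl | rfl)
  · exact Ideal.mem_of_dvd _ (Finset.dvd_prod_of_mem L hi) h1
  · rw [arr_lderiv_prod a L T hi (hhom i)]
    refine add_mem (Ideal.mul_mem_right _ _ h1) (Ideal.mul_mem_left _ _ ?_)
    exact Ideal.mem_of_dvd _ (Finset.dvd_prod_of_mem L (Finset.mem_erase.2 ⟨hij.symm, hj⟩)) h2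

/-- A prime containing `(g, ∂g/∂ℓ)` contains two of the linear forms. -/
theorem arr_le_prime (hhom : ∀ i, (L i).IsHomogeneous 1) (a : Fin m → K)
    (ha : ∀ i, eval a (L i) ≠ 0) (T : Finset ι) (q : Ideal (MvPolynomial (Fin m) K))
    (hq : q.IsPrime) (h : Ideal.span {∏ k ∈ T, L k, lderiv a (∏ k ∈ T, L k)} ≤ q) :
    ∃ i ∈ T, ∃ j ∈ T, i ≠ j ∧ Ideal.span {L i, L j} ≤ q := by
  classical
  obtain ⟨i, hi, hiq⟩ := (hq.prod_mem_iff).1 (h (Ideal.subset_span (by simp :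
    (∏ k ∈ T, L k) ∈ ({∏ k ∈ T, L k, lderiv a (∏ k ∈ T, L k)} : Set _))))
  have h2 := h (Ideal.subset_span (by simp :
    lderiv a (∏ k ∈ T, L k) ∈ ({∏ k ∈ T, L k, lderiv a (∏ k ∈ T, L k)} : Set _)))
  rw [arr_lderiv_prod a L T hi (hhom i), Ideal.add_mem_iff_right _
    (Ideal.mul_mem_right _ _ hiq)] at h2
  rcases hq.mem_or_mem h2 with h3 | h3
  · exact absurd (Ideal.eq_top_of_isUnit_mem _ h3 ((isUnit_iff_ne_zero.2 (ha i)).map C))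
      hq.ne_top
  · obtain ⟨j, hj, hjq⟩ := (hq.prod_mem_iff).1 h3
    refine ⟨i, hi, j, Finset.mem_of_mem_erase hj, (Finset.ne_of_mem_erase hj).symm, ?_⟩
    rw [Ideal.span_le]
    rintro x (rfl | rfl) <;> assumption

theorem arr_regular {d : ℕ} {L : Fin d → MvPolynomial (Fin m) K} (hd : 2 ≤ d)
    (hhom : ∀ i, (L i).IsHomogeneous 1) (hne : ∀ i, L i ≠ 0)
    (hprop : ∀ i j, i ≠ j → ∀ c : K, L i ≠ c • L j) (a : Fin m → K)
    (ha : ∀ i, eval a (L i) ≠ 0) :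
    RingTheory.Sequence.IsRegular (MvPolynomial (Fin m) K)
          [∏ i, L i, lderiv a (∏ i, L i)] := by
  refine ⟨?_, ?_⟩
  · rw [RingTheory.Sequence.isWeaklyRegular_cons_iff,
      RingTheory.Sequence.isWeaklyRegular_singleton_iff]
    refine ⟨?_, ?_⟩
    · exact IsSMulRegular.of_ne_zero (Finset.prod_ne_zero_iff.2 fun i _ => hne i)
    · refine (isSMulRegular_quotient_iff_mem_of_smul_mem _ _).2 ?_
      intro x hx
      rw [← Submodule.ideal_span_singleton_smul, smul_eq_mul, Ideal.mul_top] at hx ⊢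
      rw [Ideal.mem_span_singleton] at hx ⊢
      refine IsRelPrime.dvd_of_dvd_mul_left ?_ hx
      refine IsRelPrime.prod_left fun i hi => ?_
      exact ((arr_prime_single (hhom i) (hne i)).irreducible.isRelPrime_iff_not_dvd).2
        (arr_not_dvd_lderiv hhom hne hprop a ha _ hi)
  · intro h
    have h01 : (⟨0, by omega⟩ : Fin d) ≠ ⟨1, by omega⟩ := by simp
    have h1 := arr_lderiv_mem hhom a Finset.univ (Finset.mem_univ _) (Finset.mem_univ _) h01
    have hP := arr_prime_pair (hhom _) (hhom _) (hne _) (hne _) (hprop _ _ h01)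
      (hprop _ _ h01.symm)
    apply hP.ne_top
    rw [smul_eq_mul, Ideal.mul_top] at h
    rw [eq_top_iff, h]
    refine le_trans (le_of_eq ?_) h1
    rw [Ideal.ofList]
    congr 1
    ext r
    simp

end arrangement

end helpers

/-- Let `K` have characteristic zero and let `A = A(f_A)` be a hyperplane
arrangement of `d ≥ 2` hyperplanes in `ℙⁿ`, given by pairwise non-proportional linear
forms `L 0, …, L (d-1)` with `f_A = Π L i`.  For a general linear form `ℓ` (i.e. for all
`ℓ` whose coefficient vector lies in a nonempty basic Zariski-open subset of `K^{n+1}`),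
the pair `f_A, ∂f_A/∂ℓ` is a regular sequence in `S`, and
`(f_A, ∂f_A/∂ℓ) = ⋂_{P ∈ S(A)} (g_P, ∂g_P/∂ℓ)` is the minimal primary decomposition:
each `(g_P, ∂g_P/∂ℓ)` is a primary ideal with radical `I_P`, and no component is
superfluous. -/
theorem stmt_3 {K : Type*} [Field K] [CharZero K] {n d : ℕ} (hn : 1 ≤ n) (hd : 2 ≤ d)
    (L : Fin d → MvPolynomial (Fin (n + 1)) K)
    (hhom : ∀ i, (L i).IsHomogeneous 1) (hne : ∀ i, L i ≠ 0)
    (hprop : ∀ i j, i ≠ j → ∀ c : K, L i ≠ c • L j) :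
    ∃ p : MvPolynomial (Fin (n + 1)) K, p ≠ 0 ∧
      ∀ a : Fin (n + 1) → K, eval a p ≠ 0 →
        RingTheory.Sequence.IsRegular (MvPolynomial (Fin (n + 1)) K)
          [∏ i, L i, lderiv a (∏ i, L i)] ∧
        (Ideal.span {∏ i, L i, lderiv a (∏ i, L i)} =
          ⨅ P ∈ singSupp L, Ideal.span {gOf L P, lderiv a (gOf L P)}) ∧
        (∀ P ∈ singSupp L,
          (Ideal.span {gOf L P, lderiv a (gOf L P)}).IsPrimary ∧
          (Ideal.span {gOf L P, lderiv a (gOf L P)}).radical = P) ∧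
        (∀ P ∈ singSupp L,
          ¬ (⨅ P' ∈ singSupp L \ {P}, Ideal.span {gOf L P', lderiv a (gOf L P')}) ≤
            Ideal.span {gOf L P, lderiv a (gOf L P)}) := by
  classical
  refine ⟨∏ i, L i, Finset.prod_ne_zero_iff.2 fun i _ => hne i, fun a hap => ?_⟩
  have ha : ∀ i, eval a (L i) ≠ 0 := by
    rw [map_prod] at hap
    exact fun i => Finset.prod_ne_zero_iff.1 hap i (Finset.mem_univ i)
  have hprime : ∀ i j, i ≠ j → (Ideal.span {L i, L j}).IsPrime := fun i j hij =>
    arr_prime_pair (hhom i) (hhom j) (hne i) (hne j) (hprop i j hij) (hprop j i hij.symm)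
  have hPprime : ∀ P ∈ singSupp L, P.IsPrime := by
    rintro _ ⟨i, j, hij, rfl⟩; exact hprime i j hij
  have hspan : ∀ P ∈ singSupp L, ∀ i j, i ≠ j → L i ∈ P → L j ∈ P →
      Ideal.span {L i, L j} = P := by
    rintro _ ⟨k, l, hkl, rfl⟩ i j hij hi hj
    exact arr_span_eq (hhom i) (hhom j) (hhom k) (hhom l) hi hj (hprop i j hij)
      (hprop j i hij.symm)
  have hle : ∀ P ∈ singSupp L, Ideal.span {gOf L P, lderiv a (gOf L P)} ≤ P := by
    rintro _ ⟨i, j, hij, rfl⟩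
    exact arr_lderiv_mem hhom a _
      (Finset.mem_filter.2 ⟨Finset.mem_univ _, Ideal.subset_span (by simp)⟩)
      (Finset.mem_filter.2 ⟨Finset.mem_univ _, Ideal.subset_span (by simp)⟩) hij
  have hqle : ∀ P ∈ singSupp L, ∀ q : Ideal (MvPolynomial (Fin (n + 1)) K), q.IsPrime →
      Ideal.span {gOf L P, lderiv a (gOf L P)} ≤ q → P ≤ q := by
    intro P hP q hq hQ
    obtain ⟨i, hi, j, hj, hij, h⟩ := arr_le_prime hhom a ha _ q hq hQ
    rwa [hspan P hP i j hij (Finset.mem_filter.1 hi).2 (Finset.mem_filter.1 hj).2] at h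
  have hrad : ∀ P ∈ singSupp L, (Ideal.span {gOf L P, lderiv a (gOf L P)}).radical = P := by
    intro P hP
    apply le_antisymm
    · exact ((hPprime P hP).radical_le_iff).2 (hle P hP)
    · rw [Ideal.radical_eq_sInf]
      exact le_sInf fun q hq => hqle P hP q hq.2 hq.1
  have hfin : (singSupp L).Finite := by
    refine (Set.finite_range (fun p : Fin d × Fin d => Ideal.span {L p.1, L p.2})).subset ?_
    rintro _ ⟨i, j, _, rfl⟩
    exact ⟨(i, j), rfl⟩
  -- the complementary factor
  have hsplit : ∀ P, gOf L P * (∏ i ∈ Finset.univ.filter (fun i => ¬ L i ∈ P), L i)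
      = ∏ i, L i := by
    intro P
    simp only [gOf]
    exact Finset.prod_filter_mul_prod_filter_not _ _ _
  refine ⟨arr_regular hd hhom hne hprop a ha, ?_, ?_, ?_⟩
  · apply le_antisymm
    · refine le_iInf₂ fun P _ => ?_
      rw [← hsplit P, arr_lderiv_mul, Ideal.span_le]
      rintro x (rfl | rfl)
      · exact Ideal.mul_mem_right _ _ (Ideal.subset_span (by simp))
      · exact add_mem (Ideal.mul_mem_right _ _ (Ideal.subset_span (by simp)))
          (Ideal.mul_mem_left _ _ (Ideal.subset_span (by simp)))
    · intro x hx
      rw [Ideal.mem_iInf] at hx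
      simp only [Ideal.mem_iInf] at hx
      set I := Ideal.span {∏ i, L i, lderiv a (∏ i, L i)} with hI
      have hmem : ∀ P ∈ singSupp L,
          (∏ i ∈ Finset.univ.filter (fun i => ¬ L i ∈ P), L i) ^ 2 * x ∈ I := by
        intro P hP
        obtain ⟨α, β, e⟩ := Ideal.mem_span_pair.1 (hx P hP)
        have e1 := hsplit P
        have e2 := congrArg (lderiv a) e1
        rw [arr_lderiv_mul] at e2
        generalize (∏ i ∈ Finset.univ.filter (fun i => ¬ L i ∈ P), L i) = E at e1 e2 ⊢
        rw [hI]
        refine Ideal.mem_span_pair.2 ⟨α * E - β * lderiv a E, β * E, ?_⟩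
        rw [← e2, ← e1, ← e]; ring
      let J : Ideal (MvPolynomial (Fin (n + 1)) K) := I.colon {x}
      have hJ : ∀ y, y ∈ J ↔ y * x ∈ I := fun y => by simp [J, Submodule.mem_colon_singleton]
      have hnot : ¬ ((J : Set (MvPolynomial (Fin (n + 1)) K)) ⊆
          ⋃ P ∈ singSupp L, (P : Set (MvPolynomial (Fin (n + 1)) K))) := by
        rw [Ideal.subset_union_prime_finite (f := fun P => P) hfin ⊥ ⊥ (fun P hP _ _ => hPprime P hP)]
        rintro ⟨P, hP, hJP⟩
        have h1 := (hPprime P hP).mem_of_pow_mem _ (hJP ((hJ _).2 (hmem P hP)))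
        obtain ⟨i, hi, hiP⟩ := ((hPprime P hP).prod_mem_iff).1 h1
        exact (Finset.mem_filter.1 hi).2 hiP
      obtain ⟨s, hsJ, hs⟩ := Set.not_subset.1 hnot
      refine arr_nzd hhom hne hprop a ha Finset.univ s ?_ x ((hJ s).1 hsJ)
      intro i _ j _ hij hmem'
      exact hs (Set.mem_biUnion (show Ideal.span {L i, L j} ∈ singSupp L from ⟨i, j, hij, rfl⟩)
        hmem')
  · intro P hP
    refine ⟨?_, hrad P hP⟩
    rw [Ideal.isPrimary_iff]
    refine ⟨fun h => (hPprime P hP).ne_top (top_le_iff.1 (h ▸ hle P hP)), ?_⟩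
    intro x y hxy
    rw [hrad P hP]
    by_contra! hcon
    apply hcon.1
    refine arr_nzd hhom hne hprop a ha _ y ?_ x (by rw [mul_comm]; exact hxy)
    intro i hi j hj hij
    rw [hspan P hP i j hij (Finset.mem_filter.1 hi).2 (Finset.mem_filter.1 hj).2]
    exact hcon.2
  · intro P hP hcon
    have hfin' : (singSupp L \ {P}).Finite := hfin.subset Set.sdiff_subset
    have h1 : hfin'.toFinset.inf (fun P' => Ideal.span {gOf L P', lderiv a (gOf L P')}) ≤ P := by
      refine le_trans ?_ (hcon.trans (hle P hP))
      refine le_iInf₂ fun P' hP' => Finset.inf_le (hfin'.mem_toFinset.2 hP')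
    obtain ⟨P', hP', h2⟩ := ((hPprime P hP).inf_le').1 h1
    rw [Set.Finite.mem_toFinset] at hP'
    have h3 := hqle P' hP'.1 P (hPprime P hP) h2
    apply hP'.2
    obtain ⟨i, j, hij, rfl⟩ := hP'.1
    exact hspan P hP i j hij (h3 (Ideal.subset_span (by simp)))
      (h3 (Ideal.subset_span (by simp)))
end

section
/- Let K have characteristic zero and let g ∈ K[x₀,…,xₙ] be a product of t ≥ 2 distinct (pairwise non-proportional) linear forms, all lying in the K-span of x₀ and x₁ (so g vanishes on the codimension-two subspace P = {x₀ = x₁ = 0}). For a general linear form ℓ = Σᵢaᵢxᵢ, set ℓ_P := a₁x₀ − a₀x₁ (a linear form defining the hyperplane spanned by P and the dual point ℓ∨). Then (g, ∂g/∂ℓ) : (∂g/∂x₀, ∂g/∂x₁) = (ℓ_P, ∂g/∂ℓ) = (ℓ_P, g/λ), where λ is any linear divisor of g. Here (∂g/∂x₀, ∂g/∂x₁) coincides with the Jacobian ideal Jac(g), since all other partial derivatives of g vanish. -/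
open MvPolynomial

/-- partial derivatives of a product of polynomials with vanishing derivative vanish -/
theorem aux_pderiv_prod {K : Type*} [Field K] {m t : ℕ}
    (L : Fin t → MvPolynomial (Fin m) K) (k : Fin m) (h : ∀ i, pderiv k (L i) = 0) :
    pderiv k (∏ i, L i) = 0 := by
  refine Finset.prod_induction L (fun f => pderiv k f = 0) ?_ ?_ ?_
  · intro f g hf hg
    rw [Derivation.leibniz, hf, hg]; simp
  · simp
  · intro i _; exact h i

/-- The abstract core: colon ideal computation. -/
theorem aux_colon {A : Type*} [CommRing A] [IsDomain A] [DecompositionMonoid A]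
    (g g0 g1 D a0 a1 x0 x1 s s0 : A)
    (hs0 : s0 * a0 * s = 1)
    (hD : D = a0 * g0 + a1 * g1) (hE : s * g = x0 * g0 + x1 * g1)
    (hrel : IsRelPrime D g1) :
    (Ideal.span {g, D}).colon (Ideal.span {g0, g1} : Ideal A) =
      Ideal.span {a1 * x0 - a0 * x1, D} := by
  apply le_antisymm
  · intro f hf
    rw [Submodule.mem_colon] at hf
    have h1 := hf g1 (Ideal.subset_span (by simp))
    rw [smul_eq_mul, Ideal.mem_span_pair] at h1
    obtain ⟨u, v, huv⟩ := h1
    -- g = s0 * a0 * s * g = s0 * (x0 D - m g1)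
    have hg : g = s0 * (x0 * D - (a1 * x0 - a0 * x1) * g1) := by
      linear_combination (-g) * hs0 + s0 * a0 * hE + s0 * x0 * (-hD)
    have hdvd : D ∣ (f + u * s0 * (a1 * x0 - a0 * x1)) * g1 :=
      ⟨u * s0 * x0 + v, by linear_combination (-huv) + u * hg⟩
    obtain ⟨w, hw⟩ := hrel.dvd_of_dvd_mul_right hdvd
    rw [Ideal.mem_span_pair]
    exact ⟨-(u * s0), w, by linear_combination (-hw)⟩
  · rw [Ideal.span_le]
    rintro y hy
    rw [SetLike.mem_coe, Submodule.mem_colon]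
    intro z hz
    rw [SetLike.mem_coe, Ideal.mem_span_pair] at hz
    obtain ⟨p, q, rfl⟩ := hz
    rw [smul_eq_mul, Ideal.mem_span_pair]
    rcases hy with rfl | hy
    · exact ⟨p * a1 * s - q * a0 * s, q * x0 - p * x1, by
        rw [hD]; linear_combination (p * a1 - q * a0) * hE⟩
    · rw [Set.mem_singleton_iff] at hy
      subst hy
      exact ⟨0, p * g0 + q * g1, by ring⟩

/-- The abstract core: second description. -/
theorem aux_second {A : Type*} [CommRing A] (m D h w e e' : A) (he : e' * e = 1)
    (H : e * h = D + w * m) :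
    (Ideal.span {m, D} : Ideal A) = Ideal.span {m, h} := by
  apply le_antisymm <;> rw [Ideal.span_le] <;> rintro y (rfl | hy)
  · exact Ideal.subset_span (by simp)
  · rw [Set.mem_singleton_iff] at hy; subst hy
    rw [SetLike.mem_coe, Ideal.mem_span_pair]
    exact ⟨-w, e, by linear_combination H⟩
  · exact Ideal.subset_span (by simp)
  · rw [Set.mem_singleton_iff] at hy; subst hy
    rw [SetLike.mem_coe, Ideal.mem_span_pair]
    exact ⟨e' * w, e', by linear_combination (-e') * H + y * he⟩

/-- Let `K` have characteristic zero and let `g = Π L i` be a product of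
`t ≥ 2` distinct (pairwise non-proportional) linear forms, all lying in the `K`-span of
`x₀` and `x₁` (so `g` vanishes on `P = {x₀ = x₁ = 0}`).  For a general linear form
`ℓ = Σᵢ aᵢxᵢ`, set `ℓ_P := a₁x₀ − a₀x₁`.  Then
`(g, ∂g/∂ℓ) : (∂g/∂x₀, ∂g/∂x₁) = (ℓ_P, ∂g/∂ℓ) = (ℓ_P, g/λ)` for any linear divisor `λ`
of `g`; moreover `(∂g/∂x₀, ∂g/∂x₁)` coincides with the Jacobian ideal `Jac(g)`. -/
theorem stmt_4 {K : Type*} [Field K] [CharZero K] {n t : ℕ} (ht : 2 ≤ t)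
    (L : Fin t → MvPolynomial (Fin (n + 2)) K)
    (hhom : ∀ i, (L i).IsHomogeneous 1) (hne : ∀ i, L i ≠ 0)
    (hspan : ∀ i, L i ∈ Submodule.span K ({X 0, X 1} : Set (MvPolynomial (Fin (n + 2)) K)))
    (hprop : ∀ i j, i ≠ j → ∀ c : K, L i ≠ c • L j) :
    ∃ p : MvPolynomial (Fin (n + 2)) K, p ≠ 0 ∧
      ∀ a : Fin (n + 2) → K, eval a p ≠ 0 →
        ((Ideal.span {∏ i, L i, lderiv a (∏ i, L i)}).colon
            (Ideal.span {pderiv 0 (∏ i, L i), pderiv 1 (∏ i, L i)}) =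
          Ideal.span {C (a 1) * X 0 - C (a 0) * X 1, lderiv a (∏ i, L i)}) ∧
        (∀ j : Fin t,
          (Ideal.span {∏ i, L i, lderiv a (∏ i, L i)}).colon
              (Ideal.span {pderiv 0 (∏ i, L i), pderiv 1 (∏ i, L i)}) =
            Ideal.span {C (a 1) * X 0 - C (a 0) * X 1, ∏ i ∈ Finset.univ.erase j, L i}) ∧
        Ideal.span {pderiv 0 (∏ i, L i), pderiv 1 (∏ i, L i)} =
          Ideal.span (Set.range fun i => pderiv i (∏ j, L j)) := by
  classical
  have hbc : ∀ i, ∃ b c : K, L i = C b * X 0 + C c * X 1 := by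
    intro i
    obtain ⟨b, c, h⟩ := Submodule.mem_span_pair.1 (hspan i)
    exact ⟨b, c, by rw [← h, smul_eq_C_mul, smul_eq_C_mul]⟩
  choose b c hL using hbc
  have h01 : (1 : Fin (n + 2)) ≠ 0 := by simp
  have hL0 : ∀ i, pderiv 0 (L i) = C (b i) := by
    intro i; simp [hL i, pderiv_X, Pi.single_apply, h01.symm, h01]
  have hL1 : ∀ i, pderiv 1 (L i) = C (c i) := by
    intro i; simp [hL i, pderiv_X, Pi.single_apply, h01.symm, h01]
  have hLk : ∀ (k : Fin n) i, pderiv k.succ.succ (L i) = 0 := by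
    intro k i
    have h0 : (0 : Fin (n + 2)) ≠ k.succ.succ := (Fin.succ_ne_zero _).symm
    have h1 : (1 : Fin (n + 2)) ≠ k.succ.succ := by
      rw [← Fin.succ_zero_eq_one]
      exact fun h => (Fin.succ_ne_zero k) (Fin.succ_injective _ h).symm
    simp [hL i, pderiv_X, Pi.single_apply, h0, h1, h0.symm, h1.symm]
  have htK : (t : K) ≠ 0 := by exact_mod_cast (by omega : t ≠ 0)
  have hdet : ∀ i j, i ≠ j → b i * c j - c i * b j ≠ 0 := by
    intro i j hij h
    by_cases hb : b j = 0
    · by_cases hc : c j = 0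
      · exact hne j (by rw [hL j, hb, hc]; simp)
      · apply hprop i j hij (c i / c j)
        have : b i = 0 := by
          rw [hb] at h; simpa [hc] using h
        rw [hL i, hL j, this, hb, smul_eq_C_mul]
        have h2 : c i = c i / c j * c j := by field_simp
        conv_lhs => rw [h2]
        simp only [C_mul, C_0]; ring
    · apply hprop i j hij (b i / b j)
      rw [hL i, hL j, smul_eq_C_mul]
      have h2 : b i = b i / b j * b j := by field_simp
      have h3 : c i = b i / b j * c j := by
        field_simp; linear_combination -h
      conv_lhs => rw [h3, h2]
      have h4 : b i / b j * b j / b j = b i / b j := by field_simp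
      simp only [h4, C_mul]; ring
  have hgk : ∀ k : Fin n, pderiv k.succ.succ (∏ i, L i) = 0 :=
    fun k => aux_pderiv_prod L _ (hLk k)
  have hgh : (∏ i, L i).IsHomogeneous t := by
    have := IsHomogeneous.prod Finset.univ L (fun _ => 1) (fun i _ => hhom i)
    simpa using this
  have hE : C (t : K) * (∏ i, L i) =
      X 0 * pderiv 0 (∏ i, L i) + X 1 * pderiv 1 (∏ i, L i) := by
    have := hgh.sum_X_mul_pderiv
    rw [Fin.sum_univ_succ, Fin.sum_univ_succ] at this
    simp only [hgk, mul_zero, Finset.sum_const_zero, add_zero, Fin.succ_zero_eq_one] at this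
    rw [this, nsmul_eq_mul]; simp
  have hlD : ∀ a, lderiv a (∏ i, L i) =
      C (a 0) * pderiv 0 (∏ i, L i) + C (a 1) * pderiv 1 (∏ i, L i) := by
    intro a
    rw [lderiv, Fin.sum_univ_succ, Fin.sum_univ_succ]
    simp only [hgk, smul_zero, Finset.sum_const_zero, add_zero, Fin.succ_zero_eq_one,
      smul_eq_C_mul]
  have hfac : ∀ j, ∏ i, L i = L j * ∏ i ∈ Finset.univ.erase j, L i := fun j =>
    (Finset.mul_prod_erase _ _ (Finset.mem_univ j)).symm
  have hg0 : ∏ i, L i ≠ 0 := Finset.prod_ne_zero_iff.2 fun i _ => hne i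
  have hCu : ∀ (d : MvPolynomial (Fin (n + 2)) K) (r : K) (f), r ≠ 0 → d ∣ C r * f → d ∣ f := by
    intro d r f hr h
    have h2 := h.mul_left (C r⁻¹)
    rwa [← mul_assoc, ← C_mul, inv_mul_cancel₀ hr, C_1, one_mul] at h2
  have hcop : ∀ q, Irreducible q → q ∣ pderiv 0 (∏ i, L i) → q ∣ pderiv 1 (∏ i, L i) → False := by
    intro q hq h0 h1
    have hp : Prime q := hq.prime
    have hqg : q ∣ ∏ i, L i := by
      apply hCu q t _ htK
      rw [hE]; exact dvd_add (h0.mul_left _) (h1.mul_left _)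
    obtain ⟨i, -, hi⟩ := hp.exists_mem_finset_dvd hqg
    have hqh : q ∣ ∏ j ∈ Finset.univ.erase i, L j := by
      rw [hfac i, Derivation.leibniz] at h0 h1
      simp only [smul_eq_mul, hL0, hL1] at h0 h1
      rw [dvd_add_right (hi.mul_right _), mul_comm] at h0 h1
      by_cases hb : b i = 0
      · refine hCu q (c i) _ ?_ h1
        intro hc
        exact hne i (by rw [hL i, hb, hc]; simp)
      · exact hCu q _ _ hb h0
    obtain ⟨j, hj, hqj⟩ := hp.exists_mem_finset_dvd hqh
    have hij : i ≠ j := (Finset.ne_of_mem_erase hj).symm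
    have hd := hdet i j hij
    have hX0 : q ∣ X 0 := by
      apply hCu q _ _ hd
      have : C (b i * c j - c i * b j) * X 0 = C (c j) * L i - C (c i) * L j := by
        rw [hL i, hL j]; simp only [C_sub, C_mul]; ring
      rw [this]; exact dvd_sub (hi.mul_left _) (hqj.mul_left _)
    have hX1 : q ∣ X 1 := by
      apply hCu q _ _ hd
      have : C (b i * c j - c i * b j) * X 1 = C (b i) * L j - C (b j) * L i := by
        rw [hL i, hL j]; simp only [C_sub, C_mul]; ring
      rw [this]; exact dvd_sub (hqj.mul_left _) (hi.mul_left _)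
    have hass : Associated q (X 0) := hp.associated_of_dvd X_prime hX0
    have := hass.dvd_iff_dvd_left.1 hX1
    rw [X_dvd_X] at this
    exact h01 this.symm
  refine ⟨X 0 * ∏ i, L i, mul_ne_zero (X_ne_zero _) hg0, ?_⟩
  intro a ha
  rw [map_mul, eval_X, map_prod, mul_ne_zero_iff, Finset.prod_ne_zero_iff] at ha
  obtain ⟨ha0, haL⟩ := ha
  have hrel : IsRelPrime (lderiv a (∏ i, L i)) (pderiv 1 (∏ i, L i)) := by
    have key : ∀ q, q ∣ lderiv a (∏ i, L i) → q ∣ pderiv 1 (∏ i, L i) →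
        q ∣ pderiv 0 (∏ i, L i) := by
      intro q h h1
      rw [hlD, dvd_add_left (h1.mul_left _)] at h
      exact hCu q _ _ ha0 h
    apply WfDvdMonoid.isRelPrime_of_no_irreducible_factors
    · rintro ⟨h, h1⟩
      have h0 := key 0 (by rw [h]) (by rw [h1])
      rw [zero_dvd_iff] at h0
      rw [h0, h1] at hE
      have : C (t : K) * (∏ i, L i) ≠ 0 := mul_ne_zero (by simpa using htK) hg0
      exact this (by rw [hE]; ring)
    · intro q hq h h1
      exact hcop q hq (key q h h1) h1
  have hmain := aux_colon (∏ i, L i) _ _ _ (C (a 0)) (C (a 1)) (X 0) (X 1) (C (t : K))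
    (C ((a 0 * t)⁻¹)) (by
      rw [mul_assoc, ← C_mul, ← C_mul, inv_mul_cancel₀ (mul_ne_zero ha0 htK), C_1])
    (hlD a) hE hrel
  refine ⟨hmain, ?_, ?_⟩
  · intro j
    rw [hmain]
    have haj : b j * a 0 + c j * a 1 ≠ 0 := by
      have := haL j (Finset.mem_univ j)
      rw [hL j] at this
      simpa using this
    set h := ∏ i ∈ Finset.univ.erase j, L i with hh
    refine aux_second _ _ h (C (c j) * pderiv 0 h - C (b j) * pderiv 1 h)
      (C (t * (b j * a 0 + c j * a 1))) (C ((t * (b j * a 0 + c j * a 1))⁻¹)) ?_ ?_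
    · rw [← C_mul, inv_mul_cancel₀ (mul_ne_zero htK haj), C_1]
    · apply mul_left_cancel₀ (hne j)
      have e0 : pderiv 0 (∏ i, L i) = L j * pderiv 0 h + h * C (b j) := by
        rw [hfac j, Derivation.leibniz, hL0]; simp only [smul_eq_mul, hh]
      have e1 : pderiv 1 (∏ i, L i) = L j * pderiv 1 h + h * C (c j) := by
        rw [hfac j, Derivation.leibniz, hL1]; simp only [smul_eq_mul, hh]
      rw [hlD]
      rw [e0, e1, hfac j, ← hh] at hE
      rw [e0, e1]
      have hLj := hL j
      simp only [C_mul, C_add]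
      linear_combination (C (b j) * C (a 0) + C (c j) * C (a 1)) * hE -
        (C (a 0) * (L j * pderiv 0 h + h * C (b j)) +
          C (a 1) * (L j * pderiv 1 h + h * C (c j))) * hLj
  · apply le_antisymm <;> rw [Ideal.span_le]
    · rintro y (rfl | hy)
      · exact Ideal.subset_span ⟨0, rfl⟩
      · rw [Set.mem_singleton_iff] at hy; subst hy
        exact Ideal.subset_span ⟨1, rfl⟩
    · rintro y ⟨k, rfl⟩
      refine Fin.cases ?_ (fun k => ?_) k
      · exact Ideal.subset_span (by simp)
      · refine Fin.cases ?_ (fun k => ?_) k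
        · exact Ideal.subset_span (by simp)
        · simp only [hgk]; exact Ideal.zero_mem _
end

section
/- Let K have characteristic zero and let A = A(f_A) be a hyperplane arrangement of d ≥ 2 hyperplanes in ℙⁿ. For a general linear form ℓ, the general residual r_A = (f_A, ∂f_A/∂ℓ) : Jac(f_A) has the minimal primary decomposition r_A = ⋂_{P ∈ S(A)} (ℓ_P, I_P^{t_P − 1}), where for each P ∈ S(A), ℓ_P is a linear form defining the hyperplane spanned by P and the dual point ℓ∨, and (ℓ_P, I_P^{t_P−1}) denotes the ideal (ℓ_P) + I_P^{t_P−1}, a primary ideal with radical I_P. In particular, the radical of r_A equals ⋂_{P ∈ S(A)} I_P, the ideal of S(A). -/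
open MvPolynomial

/-- The Jacobian ideal of `f`, generated by all partial derivatives of `f`. -/
noncomputable def jacobianIdeal {K : Type*} [CommRing K] {m : ℕ}
    (f : MvPolynomial (Fin m) K) : Ideal (MvPolynomial (Fin m) K) :=
  Ideal.span (Set.range fun i => pderiv i f)

open Classical in
/-- `t_P`: the number of hyperplanes of the arrangement containing `P`. -/
noncomputable def tOf {K : Type*} [CommRing K] {m d : ℕ}
    (L : Fin d → MvPolynomial (Fin m) K) (P : Ideal (MvPolynomial (Fin m) K)) : ℕ :=
  (Finset.univ.filter (fun i => L i ∈ P)).card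


section helpers

variable {K : Type*} [Field K] {m : ℕ}

/-- directional derivative as a derivation -/
noncomputable def dirD (a : Fin m → K) :
    Derivation K (MvPolynomial (Fin m) K) (MvPolynomial (Fin m) K) :=
  mkDerivation K (fun i => C (a i))

lemma lderiv_eq_dirD (a : Fin m → K) (f : MvPolynomial (Fin m) K) :
    lderiv a f = dirD a f := by
  have hs : ∀ (s : Finset (Fin m)) (g : MvPolynomial (Fin m) K),
      (∑ i ∈ s, a i • (pderiv i : Derivation K (MvPolynomial (Fin m) K) _)) g =
        ∑ i ∈ s, a i • pderiv i g := by
    classical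
    intro s g
    induction s using Finset.induction_on with
    | empty => simp
    | insert i s hi ih => rw [Finset.sum_insert hi, Finset.sum_insert hi, ← ih]; simp
  have : (∑ i, a i • (pderiv i : Derivation K (MvPolynomial (Fin m) K) _)) = dirD a := by
    apply derivation_ext
    intro j
    rw [hs]
    simp only [dirD, mkDerivation_X, pderiv_X]
    simp [Pi.single_apply, MvPolynomial.smul_eq_C_mul]
  rw [← this, hs, lderiv]

lemma pderiv_eq_dirD (i : Fin m) (f : MvPolynomial (Fin m) K) :
    pderiv i f = dirD (Pi.single i 1) f := by
  have : (pderiv i : Derivation K (MvPolynomial (Fin m) K) _) = dirD (Pi.single i 1) := by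
    apply derivation_ext
    intro j
    simp only [dirD, mkDerivation_X, pderiv_X, Pi.single_apply]
    split_ifs <;> simp_all
  rw [this]

lemma lin_induction {p : MvPolynomial (Fin m) K → Prop} {u : MvPolynomial (Fin m) K}
    (hu : u.IsHomogeneous 1) (hX : ∀ i, p (X i)) (h0 : p 0) (hadd : ∀ x y, p x → p y → p (x + y))
    (hsmul : ∀ (c : K) x, p x → p (c • x)) : p u := by
  have h : u ∈ homogeneousSubmodule (Fin m) K 1 := hu
  rw [homogeneousSubmodule_one_eq_span_X] at h
  clear hu
  induction h using Submodule.span_induction with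
  | mem x hx => obtain ⟨i, rfl⟩ := hx; exact hX i
  | zero => exact h0
  | add x y _ _ hx hy => exact hadd x y hx hy
  | smul c x _ hx => exact hsmul c x hx

lemma dirD_lin (a : Fin m → K) {u : MvPolynomial (Fin m) K} (hu : u.IsHomogeneous 1) :
    dirD a u = C (eval a u) := by
  refine lin_induction (p := fun u => dirD a u = C (eval a u)) hu ?_ ?_ ?_ ?_
  · intro i; simp [dirD, mkDerivation_X]
  · simp
  · intro x y hx hy; simp [hx, hy]
  · intro c x hx; simp [hx, MvPolynomial.smul_eq_C_mul]

/-- the retraction killing `u, v` -/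
noncomputable def retr (b c : Fin m → K) (u v : MvPolynomial (Fin m) K) :
    MvPolynomial (Fin m) K →ₐ[K] MvPolynomial (Fin m) K :=
  aeval (fun i => X i - C (b i) * u - C (c i) * v)

lemma retr_lin (b c : Fin m → K) (u v : MvPolynomial (Fin m) K)
    {w : MvPolynomial (Fin m) K} (hw : w.IsHomogeneous 1) :
    retr b c u v w = w - C (eval b w) * u - C (eval c w) * v := by
  refine lin_induction
    (p := fun w => retr b c u v w = w - C (eval b w) * u - C (eval c w) * v) hw ?_ ?_ ?_ ?_
  · intro i; simp [retr]
  · simp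
  · intro x y hx hy; simp only [map_add, hx, hy]; ring
  · intro k x hx
    rw [map_smul, hx]
    simp only [MvPolynomial.smul_eq_C_mul, map_mul, eval_C]; ring

lemma sub_retr_mem (b c : Fin m → K) (u v g : MvPolynomial (Fin m) K) :
    g - retr b c u v g ∈ Ideal.span {u, v} := by
  rw [← Ideal.Quotient.mk_eq_mk_iff_sub_mem]
  have : (Ideal.Quotient.mkₐ K (Ideal.span {u, v})) =
      (Ideal.Quotient.mkₐ K (Ideal.span {u, v})).comp (retr b c u v) := by
    apply MvPolynomial.algHom_ext
    intro i
    simp only [AlgHom.comp_apply, Ideal.Quotient.mkₐ_eq_mk, Ideal.Quotient.mk_eq_mk_iff_sub_mem]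
    rw [Ideal.mem_span_pair]
    exact ⟨C (b i), C (c i), by simp [retr]; ring⟩
  exact DFunLike.congr_fun this g

lemma retr_ker {b c : Fin m → K} {u v : MvPolynomial (Fin m) K}
    (hu : retr b c u v u = 0) (hv : retr b c u v v = 0) :
    RingHom.ker (retr b c u v) = Ideal.span {u, v} := by
  apply le_antisymm
  · intro g hg
    have := sub_retr_mem b c u v g
    rw [RingHom.mem_ker] at hg
    rwa [hg, sub_zero] at this
  · rw [Ideal.span_le]
    rintro x (rfl | rfl)
    · exact hu
    · exact hv

/-- `u, v` linear forms with dual vectors `b, c` -/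
structure DualPair (u v : MvPolynomial (Fin m) K) (b c : Fin m → K) : Prop where
  hu : u.IsHomogeneous 1
  hv : v.IsHomogeneous 1
  bu : eval b u = 1
  cu : eval c u = 0
  bv : eval b v = 0
  cv : eval c v = 1

namespace DualPair

variable {u v : MvPolynomial (Fin m) K} {b c : Fin m → K}

lemma ker (h : DualPair u v b c) : RingHom.ker (retr b c u v) = Ideal.span {u, v} := by
  apply retr_ker
  · rw [retr_lin _ _ _ _ h.hu, h.bu, h.cu]; simp
  · rw [retr_lin _ _ _ _ h.hv, h.bv, h.cv]; simp

lemma isPrime (h : DualPair u v b c) : (Ideal.span {u, v}).IsPrime := by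
  rw [← h.ker]; exact RingHom.ker_isPrime _

lemma lin_mem (h : DualPair u v b c) {w : MvPolynomial (Fin m) K} (hw : w.IsHomogeneous 1)
    (hm : w ∈ Ideal.span {u, v}) : w = C (eval b w) * u + C (eval c w) * v := by
  rw [← h.ker, RingHom.mem_ker, retr_lin _ _ _ _ hw] at hm
  linear_combination hm

lemma prime (h : DualPair u v b c) : Prime u := by
  have hu0 : u ≠ 0 := by rintro rfl; simpa using h.bu
  have : RingHom.ker (retr b 0 u u) = Ideal.span {u, u} := by
    apply retr_ker <;>
    · rw [retr_lin _ _ _ _ h.hu, h.bu]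
      have : eval 0 u = 0 := by
        refine lin_induction (p := fun u => eval 0 u = 0) h.hu ?_ ?_ ?_ ?_ <;> simp +contextual
      rw [this]; simp
  rw [← Ideal.span_singleton_prime hu0]
  rw [Set.pair_eq_singleton] at this
  rw [← this]; exact RingHom.ker_isPrime _

lemma symm (h : DualPair u v b c) : DualPair v u c b :=
  ⟨h.hv, h.hu, h.cv, h.bv, h.cu, h.bu⟩

lemma not_dvd (h : DualPair u v b c) : ¬ u ∣ v := by
  rintro ⟨w, rfl⟩
  have := h.cv
  rw [map_mul, h.cu] at this
  simp at this

lemma span_eq (h : DualPair u v b c) {w z : MvPolynomial (Fin m) K} {b' c' : Fin m → K}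
    (h' : DualPair w z b' c') (hw : w ∈ Ideal.span {u, v}) (hz : z ∈ Ideal.span {u, v}) :
    Ideal.span {w, z} = Ideal.span {u, v} := by
  apply le_antisymm
  · rw [Ideal.span_le]
    rintro x (rfl | rfl)
    · exact hw
    · exact hz
  have ew := h.lin_mem h'.hu hw
  have ez := h.lin_mem h'.hv hz
  have e1 := h'.bu
  have e2 := h'.cu
  have e3 := h'.bv
  have e4 := h'.cv
  rw [ew] at e1 e2
  rw [ez] at e3 e4
  simp only [map_add, map_mul, eval_C] at e1 e2 e3 e4
  set p := eval b w
  set q := eval c w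
  set r := eval b z
  set s := eval c z
  set x := eval b' u
  set y := eval b' v
  set x' := eval c' u
  set y' := eval c' v
  have M : !![p, q; r, s] * !![x, x'; y, y'] = 1 := by
    rw [Matrix.mul_fin_two, e1, e2, e3, e4, Matrix.one_fin_two]
  rw [mul_eq_one_comm, Matrix.mul_fin_two, Matrix.one_fin_two] at M
  have m1 := congrFun (congrFun M 0) 0
  have m2 := congrFun (congrFun M 0) 1
  have m3 := congrFun (congrFun M 1) 0
  have m4 := congrFun (congrFun M 1) 1
  simp at m1 m2 m3 m4
  have n1 := congrArg (C (σ := Fin m)) m1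
  have n2 := congrArg (C (σ := Fin m)) m2
  have n3 := congrArg (C (σ := Fin m)) m3
  have n4 := congrArg (C (σ := Fin m)) m4
  simp only [map_add, map_mul, map_one, map_zero] at n1 n2 n3 n4
  rw [Ideal.span_le]
  rintro t (rfl | rfl)
  · rw [SetLike.mem_coe, Ideal.mem_span_pair]
    refine ⟨C x, C x', ?_⟩
    linear_combination C x * ew + C x' * ez + t * n1 + v * n2
  · rw [SetLike.mem_coe, Ideal.mem_span_pair]
    refine ⟨C y, C y', ?_⟩
    linear_combination C y * ew + C y' * ez + u * n3 + t * n4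

end DualPair

lemma exists_half {u v : MvPolynomial (Fin m) K} (hu : u.IsHomogeneous 1)
    (hv : v.IsHomogeneous 1) (hv0 : v ≠ 0) (huv : ∀ c : K, u ≠ c • v) :
    ∃ b, eval b u = 1 ∧ eval b v = 0 := by
  have coe : ∀ w : MvPolynomial (Fin m) K, w.IsHomogeneous 1 →
      w = ∑ i, C (coeff (Finsupp.single i 1) w) * X i := by
    intro w hw
    refine lin_induction
      (p := fun w => w = ∑ i, C (coeff (Finsupp.single i 1) w) * X i) hw ?_ ?_ ?_ ?_
    · intro i
      rw [Finset.sum_eq_single i]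
      · simp
      · intro j _ hj
        rw [MvPolynomial.coeff_X]
        simp [Finsupp.single_left_inj, hj.symm]
      · simp
    · simp
    · intro x y hx hy
      simp only [coeff_add, map_add, add_mul, Finset.sum_add_distrib]
      rw [← hx, ← hy]
    · intro k x hx
      simp only [coeff_smul, smul_eq_mul, map_mul, mul_assoc, ← Finset.mul_sum]
      rw [← hx, MvPolynomial.smul_eq_C_mul]
  have hev : ∀ w : MvPolynomial (Fin m) K, w.IsHomogeneous 1 → ∀ b : Fin m → K,
      eval b w = ∑ i, coeff (Finsupp.single i 1) w * b i := by
    intro w hw b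
    conv_lhs => rw [coe w hw]
    simp
  obtain ⟨j, hj⟩ : ∃ j, coeff (Finsupp.single j 1) v ≠ 0 := by
    by_contra! h
    exact hv0 (by rw [coe v hv]; simp [h])
  obtain ⟨i, hi⟩ : ∃ i, coeff (Finsupp.single i 1) u * coeff (Finsupp.single j 1) v -
      coeff (Finsupp.single j 1) u * coeff (Finsupp.single i 1) v ≠ 0 := by
    by_contra! h
    obtain ⟨k, hk⟩ : ∃ k, ∀ i, coeff (Finsupp.single i 1) u = k * coeff (Finsupp.single i 1) v := by
      refine ⟨coeff (Finsupp.single j 1) u / coeff (Finsupp.single j 1) v, fun i => ?_⟩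
      have := h i
      field_simp
      linear_combination this
    apply huv k
    rw [coe u hu]
    conv_rhs => rw [coe v hv]
    rw [Finset.smul_sum]
    refine Finset.sum_congr rfl fun i _ => ?_
    rw [MvPolynomial.smul_eq_C_mul, ← mul_assoc, ← map_mul, hk]
  set δ := coeff (Finsupp.single i 1) u * coeff (Finsupp.single j 1) v -
      coeff (Finsupp.single j 1) u * coeff (Finsupp.single i 1) v with hδ
  refine ⟨δ⁻¹ • (coeff (Finsupp.single j 1) v • Pi.single i 1
    - coeff (Finsupp.single i 1) v • Pi.single j 1), ?_, ?_⟩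
  · rw [hev u hu]
    simp [Pi.single_apply, mul_sub, Finset.sum_sub_distrib]
    field_simp
    linear_combination -hδ
  · rw [hev v hv]
    simp [Pi.single_apply, mul_sub, Finset.sum_sub_distrib]
    ring

lemma exists_dualPair {u v : MvPolynomial (Fin m) K} (hu : u.IsHomogeneous 1)
    (hv : v.IsHomogeneous 1) (huv : ∀ c : K, u ≠ c • v) (hvu : ∀ c : K, v ≠ c • u) :
    ∃ b c, DualPair u v b c := by
  have hu0 : u ≠ 0 := by simpa using huv 0
  have hv0 : v ≠ 0 := by simpa using hvu 0
  obtain ⟨b, b1, b2⟩ := exists_half hu hv hv0 huv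
  obtain ⟨c, c1, c2⟩ := exists_half hv hu hu0 hvu
  exact ⟨b, c, hu, hv, b1, c2, b2, c1⟩

section ringlemmas

variable {R : Type*} [CommRing R]

lemma primary_aux [IsDomain R] {u v : R} (hu : Prime u) (hv : ¬ u ∣ v)
    (hP : (Ideal.span {u, v}).IsPrime) (k : ℕ) {x y : R} (hxy : x * y ∈ Ideal.span {u, v ^ k})
    (hy : y ∉ Ideal.span {u, v}) : x ∈ Ideal.span {u, v ^ k} := by
  induction k with
  | zero => rw [Ideal.mem_span_pair]; exact ⟨0, x, by simp⟩
  | succ k ih =>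
    obtain ⟨p, q, hpq⟩ := Ideal.mem_span_pair.1 hxy
    have hx := ih (Ideal.mem_span_pair.2 ⟨p, q * v, by rw [← hpq]; ring⟩)
    obtain ⟨α, β, hx⟩ := Ideal.mem_span_pair.1 hx
    have hd : u ∣ v ^ k * (β * y - q * v) := ⟨p - α * y, by linear_combination y * hx - hpq⟩
    rcases hu.dvd_or_dvd hd with h | h
    · exact absurd (hu.dvd_of_dvd_pow h) hv
    · obtain ⟨r, hr⟩ := h
      have hβ : β * y ∈ Ideal.span {u, v} :=
        Ideal.mem_span_pair.2 ⟨r, q, by linear_combination -hr⟩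
      obtain ⟨e, e', he⟩ := Ideal.mem_span_pair.1 ((hP.mem_or_mem hβ).resolve_right hy)
      refine Ideal.mem_span_pair.2 ⟨α + e * v ^ k, e', ?_⟩
      linear_combination hx + v ^ k * he

lemma span_sup_pow (u v : R) (k : ℕ) :
    Ideal.span {u} ⊔ Ideal.span {u, v} ^ k = Ideal.span {u, v ^ k} := by
  apply le_antisymm
  · refine sup_le ?_ ?_
    · exact Ideal.span_mono (by simp)
    · induction k with
      | zero =>
        intro x _
        exact Ideal.mem_span_pair.2 ⟨0, x, by simp⟩
      | succ k ih =>
        rw [pow_succ]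
        refine (Ideal.mul_mono_left ih).trans ?_
        rw [Ideal.mul_le]
        intro x hx y hy
        obtain ⟨p, q, rfl⟩ := Ideal.mem_span_pair.1 hx
        obtain ⟨r, s, rfl⟩ := Ideal.mem_span_pair.1 hy
        exact Ideal.mem_span_pair.2 ⟨p * (r * u + s * v) + q * v ^ k * r, q * s, by ring⟩
  · rw [Ideal.span_le]
    rintro x (rfl | rfl)
    · exact Ideal.mem_sup_left (Ideal.mem_span_singleton_self _)
    · exact Ideal.mem_sup_right (Ideal.pow_mem_pow (Ideal.subset_span (by simp)) k)

lemma koszul [IsDomain R] {f g u v w h : R} (hg : g ≠ 0)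
    (hreg : ∀ α β, α * f + β * g = 0 → ∃ c, α = c * g ∧ β = -(c * f))
    (hu : Prime u) (hv : ¬ u ∣ v) (hP : (Ideal.span {u, v}).IsPrime)
    (hw : w ∉ Ideal.span {u, v})
    (h1 : u * h ∈ Ideal.span {f, g}) (h2 : v * h ∈ Ideal.span {f, g})
    (h3 : w * h ∈ Ideal.span {f, g}) : h ∈ Ideal.span {f, g} := by
  obtain ⟨α1, β1, h1⟩ := Ideal.mem_span_pair.1 h1
  obtain ⟨α2, β2, h2⟩ := Ideal.mem_span_pair.1 h2
  obtain ⟨α3, β3, h3⟩ := Ideal.mem_span_pair.1 h3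
  obtain ⟨c12, a12, b12⟩ := hreg (v * α1 - u * α2) (v * β1 - u * β2)
    (by linear_combination v * h1 - u * h2)
  obtain ⟨c13, a13, b13⟩ := hreg (w * α1 - u * α3) (w * β1 - u * β3)
    (by linear_combination w * h1 - u * h3)
  obtain ⟨c23, a23, b23⟩ := hreg (w * α2 - v * α3) (w * β2 - v * β3)
    (by linear_combination w * h2 - v * h3)
  have hc : w * c12 - v * c13 + u * c23 = 0 := by
    apply mul_right_cancel₀ hg
    linear_combination -w * a12 + v * a13 - u * a23
  have hc' : w * c12 ∈ Ideal.span {u, v} :=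
    Ideal.mem_span_pair.2 ⟨-c23, c13, by linear_combination -hc⟩
  obtain ⟨q, p, hpq⟩ := Ideal.mem_span_pair.1 ((hP.mem_or_mem hc').resolve_left hw)
  have e1 : u ∣ v * (α1 - p * g) := ⟨α2 + q * g, by linear_combination a12 - g * hpq⟩
  have e2 : u ∣ v * (β1 + p * f) := ⟨β2 - q * f, by linear_combination b12 + f * hpq⟩
  obtain ⟨e, he⟩ := (hu.dvd_or_dvd e1).resolve_left hv
  obtain ⟨e', he'⟩ := (hu.dvd_or_dvd e2).resolve_left hv
  refine Ideal.mem_span_pair.2 ⟨e, e', ?_⟩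
  apply mul_left_cancel₀ hu.ne_zero
  linear_combination h1 - f * he - g * he'

end ringlemmas

lemma relPrime_deriv {ι : Type*} (s : Finset ι) (M : ι → MvPolynomial (Fin m) K)
    (a : Fin m → K) (hlin : ∀ i ∈ s, (M i).IsHomogeneous 1) (ha : ∀ i ∈ s, eval a (M i) ≠ 0)
    (hp : ∀ i ∈ s, Prime (M i)) (hnd : ∀ i ∈ s, ∀ j ∈ s, i ≠ j → ¬ M i ∣ M j) :
    IsRelPrime (∏ i ∈ s, M i) (dirD a (∏ i ∈ s, M i)) := by
  classical
  apply IsRelPrime.prod_left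
  intro i hi
  rw [(hp i hi).irreducible.isRelPrime_iff_not_dvd]
  intro hdvd
  rw [← Finset.mul_prod_erase s M hi, Derivation.leibniz, dirD_lin a (hlin i hi), smul_eq_mul,
    smul_eq_mul, dvd_add_right (Dvd.intro _ rfl)] at hdvd
  rcases (hp i hi).dvd_or_dvd hdvd with h | h
  · obtain ⟨j, hj, h⟩ := ((hp i hi).dvd_finsetProd_iff _).1 h
    exact hnd i hi j (Finset.mem_of_mem_erase hj) (Finset.ne_of_mem_erase hj).symm h
  · exact (hp i hi).not_isUnit (isUnit_of_dvd_unit h ((ha i hi).isUnit.map C))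

lemma euler_local {ι : Type*} (s : Finset ι) (M : ι → MvPolynomial (Fin m) K)
    {u v : MvPolynomial (Fin m) K} {b a : Fin m → K} (h : DualPair u v b a)
    (hlin : ∀ i ∈ s, (M i).IsHomogeneous 1) (hm : ∀ i ∈ s, M i ∈ Ideal.span {u, v}) :
    u * dirD b (∏ i ∈ s, M i) + v * dirD a (∏ i ∈ s, M i) =
      C (s.card : K) * ∏ i ∈ s, M i := by
  classical
  induction s using Finset.induction_on with
  | empty => simp
  | insert i s hi ih =>
    have ih := ih (fun j hj => hlin j (Finset.mem_insert_of_mem hj))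
      (fun j hj => hm j (Finset.mem_insert_of_mem hj))
    have hl := hlin i (Finset.mem_insert_self _ _)
    have e := h.lin_mem hl (hm i (Finset.mem_insert_self _ _))
    rw [Finset.prod_insert hi, Finset.card_insert_of_notMem hi, Derivation.leibniz,
      Derivation.leibniz, dirD_lin a hl, dirD_lin b hl]
    simp only [smul_eq_mul, Nat.cast_add, Nat.cast_one, map_add, map_one]
    linear_combination M i * ih - (∏ i ∈ s, M i) * e

lemma dir_local {ι : Type*} (s : Finset ι) (M : ι → MvPolynomial (Fin m) K)
    {u v : MvPolynomial (Fin m) K} {b a : Fin m → K} (h : DualPair u v b a)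
    (hlin : ∀ i ∈ s, (M i).IsHomogeneous 1) (hm : ∀ i ∈ s, M i ∈ Ideal.span {u, v})
    (e : Fin m → K) :
    dirD e (∏ i ∈ s, M i) = C (eval e u) * dirD b (∏ i ∈ s, M i) +
      C (eval e v) * dirD a (∏ i ∈ s, M i) := by
  classical
  induction s using Finset.induction_on with
  | empty => simp
  | insert i s hi ih =>
    have ih := ih (fun j hj => hlin j (Finset.mem_insert_of_mem hj))
      (fun j hj => hm j (Finset.mem_insert_of_mem hj))
    have hl := hlin i (Finset.mem_insert_self _ _)
    have e' := congrArg (fun w => C (σ := Fin m) (eval e w))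
      (h.lin_mem hl (hm i (Finset.mem_insert_self _ _)))
    simp only [map_add, map_mul, eval_C] at e'
    rw [Finset.prod_insert hi, Derivation.leibniz, Derivation.leibniz,
      Derivation.leibniz, dirD_lin a hl, dirD_lin b hl, dirD_lin e hl]
    simp only [smul_eq_mul]
    linear_combination M i * ih + (∏ i ∈ s, M i) * e'

lemma mod_local {ι : Type*} (s : Finset ι) (M : ι → MvPolynomial (Fin m) K)
    {u v : MvPolynomial (Fin m) K} {b a : Fin m → K} (h : DualPair u v b a)
    (hlin : ∀ i ∈ s, (M i).IsHomogeneous 1) (hm : ∀ i ∈ s, M i ∈ Ideal.span {u, v}) :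
    ∃ w, ∏ i ∈ s, M i = C (∏ i ∈ s, eval a (M i)) * v ^ s.card + u * w := by
  classical
  induction s using Finset.induction_on with
  | empty => exact ⟨0, by simp⟩
  | insert i s hi ih =>
    obtain ⟨w, ih⟩ := ih (fun j hj => hlin j (Finset.mem_insert_of_mem hj))
      (fun j hj => hm j (Finset.mem_insert_of_mem hj))
    have hl := hlin i (Finset.mem_insert_self _ _)
    have e := h.lin_mem hl (hm i (Finset.mem_insert_self _ _))
    refine ⟨C (eval b (M i)) * (∏ i ∈ s, M i) + C (eval a (M i)) * v * w, ?_⟩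
    rw [Finset.prod_insert hi, Finset.card_insert_of_notMem hi, Finset.prod_insert hi, map_mul]
    linear_combination (∏ i ∈ s, M i) * e + C (eval a (M i)) * v * ih

lemma span_local [CharZero K] {ι : Type*} (s : Finset ι) (hs : s.Nonempty)
    (M : ι → MvPolynomial (Fin m) K)
    {u v : MvPolynomial (Fin m) K} {b a : Fin m → K} (h : DualPair u v b a)
    (hlin : ∀ i ∈ s, (M i).IsHomogeneous 1) (hm : ∀ i ∈ s, M i ∈ Ideal.span {u, v})
    (ha : ∀ i ∈ s, eval a (M i) ≠ 0) :
    Ideal.span {u, dirD a (∏ i ∈ s, M i)} = Ideal.span {u, v ^ (s.card - 1)} := by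
  obtain ⟨w, hw⟩ := mod_local s M h hlin hm
  have hc : (∏ i ∈ s, eval a (M i)) * (s.card : K) ≠ 0 :=
    mul_ne_zero (Finset.prod_ne_zero_iff.2 ha) (by simpa using hs.ne_empty)
  set c := ∏ i ∈ s, eval a (M i)
  have e : dirD a (∏ i ∈ s, M i) = C (c * (s.card : K)) * v ^ (s.card - 1) + u * dirD a w := by
    rw [hw, map_add, Derivation.leibniz, Derivation.leibniz, Derivation.leibniz_pow,
      dirD_lin a h.hu, dirD_lin a h.hv, h.cu, h.cv, derivation_C]
    simp only [smul_eq_mul, nsmul_eq_mul, map_mul, map_zero, map_one, map_natCast]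
    ring
  have hinv : C (σ := Fin m) (c * (s.card : K))⁻¹ * C (c * (s.card : K)) = 1 := by
    rw [← map_mul, inv_mul_cancel₀ hc, map_one]
  apply le_antisymm <;> rw [Ideal.span_le] <;> rintro x (rfl | rfl)
  · exact Ideal.subset_span (by simp)
  · exact Ideal.mem_span_pair.2 ⟨dirD a w, C (c * (s.card : K)), by rw [e]; ring⟩
  · exact Ideal.subset_span (by simp)
  · refine Ideal.mem_span_pair.2
      ⟨- C (c * (s.card : K))⁻¹ * dirD a w, C (c * (s.card : K))⁻¹, ?_⟩
    rw [e]
    linear_combination v ^ (s.card - 1) * hinv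

lemma colon_local_le {u v F G g : MvPolynomial (Fin m) K} {a b : Fin m → K} {t : K}
    (ht : t ≠ 0) (heul : u * dirD b F + v * dirD a F = C t * F)
    (hrel : IsRelPrime F (dirD a F))
    (hg : g * dirD b (F * G) ∈ Ideal.span {F * G, dirD a (F * G)}) :
    g * G ∈ Ideal.span {u, dirD a F} := by
  have hinv : C (σ := Fin m) t⁻¹ * C t = 1 := by
    rw [← map_mul, inv_mul_cancel₀ ht, map_one]
  have hF : F = C t⁻¹ * (u * dirD b F + v * dirD a F) := by
    rw [heul]; linear_combination -F * hinv
  have hrel' : IsRelPrime (dirD a F) (dirD b F) := by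
    intro d hd1 hd2
    refine hrel ?_ hd1
    rw [hF]
    exact Dvd.dvd.mul_left (dvd_add (hd2.mul_left _) (hd1.mul_left _)) _
  obtain ⟨x, y, hxy⟩ := Ideal.mem_span_pair.1 hg
  simp only [Derivation.leibniz, smul_eq_mul] at hxy
  set z := x * G + y * dirD a G - g * dirD b G with hz
  have hd : dirD a F ∣ dirD b F * (g * G - C t⁻¹ * z * u) := by
    refine ⟨C t⁻¹ * z * v + y * G, ?_⟩
    rw [hz]
    linear_combination -hxy + (x * G + y * dirD a G - g * dirD b G) * hF
  obtain ⟨r, hr⟩ := hrel'.dvd_of_dvd_mul_left hd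
  exact Ideal.mem_span_pair.2 ⟨C t⁻¹ * z, r, by linear_combination -hr⟩

lemma colon_local_ge {u v F G g p q : MvPolynomial (Fin m) K} {a b e : Fin m → K} {t : K}
    (heul : u * dirD b F + v * dirD a F = C t * F)
    (he : dirD e F = p * dirD b F + q * dirD a F)
    (hg : g ∈ Ideal.span {u, dirD a F}) :
    G ^ 2 * (g * dirD e (F * G)) ∈ Ideal.span {F * G, dirD a (F * G)} := by
  obtain ⟨α, β, rfl⟩ := Ideal.mem_span_pair.1 hg
  set y := α * u * q + β * dirD e F - α * p * v with hy
  refine Ideal.mem_span_pair.2 ⟨G * (α * u + β * dirD a F) * dirD e G + α * p * C t * G ^ 2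
    - G * y * dirD a G, G ^ 2 * y, ?_⟩
  simp only [Derivation.leibniz, smul_eq_mul]
  rw [hy]
  linear_combination -G ^ 3 * α * p * heul - G ^ 3 * α * u * he

lemma exists_assoc {R : Type*} [CommRing R] [IsNoetherianRing R] (I : Ideal R) (h : R)
    (hI : h ∉ I) : ∃ (q : Ideal R) (h' : R), q.IsPrime ∧ h' ∉ I ∧ (∀ x, x ∈ q ↔ x * h' ∈ I) ∧
      ∀ x, x * h ∈ I → x ∈ q := by
  have h0 : Ideal.Quotient.mk I h ≠ 0 := by rwa [Ne, Ideal.Quotient.eq_zero_iff_mem]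
  obtain ⟨q, hq, hle⟩ := exists_le_isAssociatedPrime_of_isNoetherianRing R
    (Ideal.Quotient.mk I h) h0
  obtain ⟨hqp, y, hy⟩ := isAssociatedPrime_iff.1 hq
  obtain ⟨h', rfl⟩ := Ideal.Quotient.mk_surjective y
  have key : ∀ z x : R, x ∈ Submodule.colon (⊥ : Submodule R (R ⧸ I)) {Ideal.Quotient.mk I z} ↔
      x * z ∈ I := by
    intro z x
    rw [Submodule.mem_colon_singleton, Submodule.mem_bot, ← Ideal.Quotient.eq_zero_iff_mem,
      map_mul]
    rfl
  refine ⟨q, h', hqp, ?_, ?_, ?_⟩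
  · intro hh
    apply hqp.ne_top
    rw [hy, Ideal.eq_top_iff_one, key]
    simpa using hh
  · intro x; rw [hy, key]
  · intro x hx
    exact hle ((key h x).2 hx)

section arrangement

variable {d : ℕ} {L : Fin d → MvPolynomial (Fin m) K}

open Classical in
/-- product of the forms vanishing on `P` -/
noncomputable def prodIn (L : Fin d → MvPolynomial (Fin m) K)
    (P : Ideal (MvPolynomial (Fin m) K)) : MvPolynomial (Fin m) K :=
  ∏ i ∈ Finset.univ.filter (fun i => L i ∈ P), L i

open Classical in
/-- product of the forms not vanishing on `P` -/
noncomputable def prodOut (L : Fin d → MvPolynomial (Fin m) K)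
    (P : Ideal (MvPolynomial (Fin m) K)) : MvPolynomial (Fin m) K :=
  ∏ i ∈ Finset.univ.filter (fun i => ¬ L i ∈ P), L i

lemma prodIn_mul_prodOut (P : Ideal (MvPolynomial (Fin m) K)) :
    prodIn L P * prodOut L P = ∏ i, L i := by
  classical
  exact Finset.prod_filter_mul_prod_filter_not _ _ _

lemma dual_of_ne (hhom : ∀ i, (L i).IsHomogeneous 1)
    (hprop : ∀ i j, i ≠ j → ∀ c : K, L i ≠ c • L j) {i j : Fin d} (hij : i ≠ j) :
    ∃ b c, DualPair (L i) (L j) b c :=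
  exists_dualPair (hhom i) (hhom j) (hprop i j hij) (hprop j i hij.symm)

lemma singSupp_prime (hhom : ∀ i, (L i).IsHomogeneous 1)
    (hprop : ∀ i j, i ≠ j → ∀ c : K, L i ≠ c • L j) {P : Ideal (MvPolynomial (Fin m) K)}
    (hP : P ∈ singSupp L) : P.IsPrime := by
  obtain ⟨i, j, hij, rfl⟩ := hP
  obtain ⟨b, c, h⟩ := dual_of_ne hhom hprop hij
  exact h.isPrime

lemma singSupp_finite : (singSupp L).Finite := by
  apply (Set.finite_range (fun p : Fin d × Fin d => Ideal.span {L p.1, L p.2})).subset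
  rintro P ⟨i, j, _, rfl⟩
  exact ⟨(i, j), rfl⟩

lemma singSupp_eq_of_le (hhom : ∀ i, (L i).IsHomogeneous 1)
    (hprop : ∀ i j, i ≠ j → ∀ c : K, L i ≠ c • L j) {P P' : Ideal (MvPolynomial (Fin m) K)}
    (hP : P ∈ singSupp L) (hP' : P' ∈ singSupp L) (hle : P' ≤ P) : P' = P := by
  obtain ⟨i, j, hij, rfl⟩ := hP
  obtain ⟨i', j', hij', rfl⟩ := hP'
  obtain ⟨b, c, h⟩ := dual_of_ne hhom hprop hij
  obtain ⟨b', c', h'⟩ := dual_of_ne hhom hprop hij'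
  exact h.span_eq h' (hle (Ideal.subset_span (by simp))) (hle (Ideal.subset_span (by simp)))

lemma form_prime (hd : 2 ≤ d) (hhom : ∀ i, (L i).IsHomogeneous 1)
    (hprop : ∀ i j, i ≠ j → ∀ c : K, L i ≠ c • L j) (i : Fin d) : Prime (L i) := by
  have : Nontrivial (Fin d) := Fin.nontrivial_iff_two_le.2 hd
  obtain ⟨j, hj⟩ := exists_ne i
  obtain ⟨b, c, h⟩ := dual_of_ne hhom hprop hj.symm
  exact h.prime

lemma relPrime_sub (hd : 2 ≤ d) (hhom : ∀ i, (L i).IsHomogeneous 1)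
    (hprop : ∀ i j, i ≠ j → ∀ c : K, L i ≠ c • L j) {a : Fin m → K}
    (ha : ∀ i, eval a (L i) ≠ 0) (s : Finset (Fin d)) :
    IsRelPrime (∏ i ∈ s, L i) (dirD a (∏ i ∈ s, L i)) := by
  apply relPrime_deriv s L a (fun i _ => hhom i) (fun i _ => ha i)
    (fun i _ => form_prime hd hhom hprop i)
  intro i _ j _ hij
  obtain ⟨b, c, h⟩ := dual_of_ne hhom hprop hij
  exact h.not_dvd

/-- unmixedness of the complete intersection `(f, ∂f/∂a)` -/
lemma unmixed (hd : 2 ≤ d) (hhom : ∀ i, (L i).IsHomogeneous 1)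
    (hprop : ∀ i j, i ≠ j → ∀ c : K, L i ≠ c • L j) {a : Fin m → K}
    (ha : ∀ i, eval a (L i) ≠ 0) {h : MvPolynomial (Fin m) K}
    (hh : ∀ P ∈ singSupp L, prodOut L P ^ 2 * h ∈ Ideal.span {∏ i, L i, dirD a (∏ i, L i)}) :
    h ∈ Ideal.span {∏ i, L i, dirD a (∏ i, L i)} := by
  classical
  by_contra hI
  obtain ⟨q, h', hq, hI', hqm, hqh⟩ := exists_assoc _ h hI
  have hrel := relPrime_sub hd hhom hprop ha Finset.univ
  have hf0 : (∏ i, L i) ≠ 0 :=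
    Finset.prod_ne_zero_iff.2 fun i _ => (form_prime hd hhom hprop i).ne_zero
  have hfq : (∏ i, L i) ∈ q :=
    (hqm _).2 (Ideal.mul_mem_right _ _ (Ideal.subset_span (by simp)))
  have hgq : dirD a (∏ i, L i) ∈ q :=
    (hqm _).2 (Ideal.mul_mem_right _ _ (Ideal.subset_span (by simp)))
  obtain ⟨i, -, hi⟩ := (hq.prod_mem_iff).1 hfq
  rw [← Finset.mul_prod_erase _ L (Finset.mem_univ i), Derivation.leibniz,
    dirD_lin a (hhom i), smul_eq_mul, smul_eq_mul] at hgq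
  have hgq' := (q.add_mem_iff_right (Ideal.mul_mem_right _ _ hi)).1 hgq
  have hN := (hq.mem_or_mem hgq').resolve_right
    (fun hc => hq.ne_top (Ideal.eq_top_of_isUnit_mem _ hc ((ha i).isUnit.map C)))
  obtain ⟨j, hj, hjq⟩ := (hq.prod_mem_iff).1 hN
  have hij : i ≠ j := (Finset.ne_of_mem_erase hj).symm
  have hP : Ideal.span {L i, L j} ∈ singSupp L := ⟨i, j, hij, rfl⟩
  have hG := hq.mem_of_pow_mem _ (hqh _ (hh _ hP))
  obtain ⟨k, hk, hkq⟩ := (hq.prod_mem_iff).1 hG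
  have hk' : L k ∉ Ideal.span {L i, L j} := by simpa using hk
  obtain ⟨b, c, hD⟩ := dual_of_ne hhom hprop hij
  have hg0 : dirD a (∏ i, L i) ≠ 0 := by
    intro h0
    rw [h0] at hrel
    have hu : IsUnit (∏ i, L i) := hrel dvd_rfl (dvd_zero _)
    exact (form_prime hd hhom hprop i).not_isUnit
      (isUnit_of_dvd_unit (Finset.dvd_prod_of_mem L (Finset.mem_univ i)) hu)
  refine hI' (koszul hg0 ?_ hD.prime hD.not_dvd hD.isPrime hk'
    ((hqm _).1 hi) ((hqm _).1 hjq) ((hqm _).1 hkq))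
  intro α β hαβ
  have hdv : dirD a (∏ i, L i) ∣ (∏ i, L i) * α := ⟨-β, by linear_combination hαβ⟩
  obtain ⟨c, hc⟩ := hrel.symm.dvd_of_dvd_mul_left hdv
  refine ⟨c, by rw [hc]; ring, ?_⟩
  apply mul_right_cancel₀ hg0
  rw [hc] at hαβ
  linear_combination hαβ

/-- all local information at `P` -/
lemma local_data [CharZero K] (hd : 2 ≤ d) (hhom : ∀ i, (L i).IsHomogeneous 1)
    (hprop : ∀ i j, i ≠ j → ∀ c : K, L i ≠ c • L j) {a : Fin m → K}
    (ha : ∀ i, eval a (L i) ≠ 0) {P : Ideal (MvPolynomial (Fin m) K)} (hP : P ∈ singSupp L)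
    {u : MvPolynomial (Fin m) K} (hu0 : u ≠ 0) (hu : u.IsHomogeneous 1) (huP : u ∈ P)
    (hua : eval a u = 0) :
    ∃ v b, DualPair u v b a ∧ P = Ideal.span {u, v} ∧
      Ideal.span {u} ⊔ P ^ (tOf L P - 1) = Ideal.span {u, v ^ (tOf L P - 1)} ∧
      Ideal.span {u} ⊔ P ^ (tOf L P - 1) = Ideal.span {u, dirD a (prodIn L P)} ∧
      2 ≤ tOf L P ∧
      u * dirD b (prodIn L P) + v * dirD a (prodIn L P) = C (tOf L P : K) * prodIn L P ∧
      ∀ e, dirD e (prodIn L P) = C (eval e u) * dirD b (prodIn L P) +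
        C (eval e v) * dirD a (prodIn L P) := by
  classical
  have hP' := hP
  obtain ⟨i, j, hij, hPij⟩ := hP'
  obtain ⟨b₀, c₀, h₀⟩ := dual_of_ne hhom hprop hij
  have hLi : L i ∈ P := hPij ▸ Ideal.subset_span (by simp)
  have hLj : L j ∈ P := hPij ▸ Ideal.subset_span (by simp)
  set v := (eval a (L i))⁻¹ • L i with hv
  have hvl : v.IsHomogeneous 1 := (homogeneousSubmodule (Fin m) K 1).smul_mem _ (hhom i)
  have hva : eval a v = 1 := by
    rw [hv, MvPolynomial.smul_eq_C_mul, map_mul, eval_C, inv_mul_cancel₀ (ha i)]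
  have hvP : v ∈ P := by rw [hv, MvPolynomial.smul_eq_C_mul]; exact Ideal.mul_mem_left _ _ hLi
  have hv0 : v ≠ 0 := by intro h; rw [h] at hva; simp at hva
  obtain ⟨b, hb1, hb2⟩ := exists_half hu hvl hv0 (by
    intro c hc
    have := congrArg (eval a) hc
    rw [hua, MvPolynomial.smul_eq_C_mul, map_mul, hva, eval_C, mul_one] at this
    rw [← this, zero_smul] at hc
    exact hu0 hc)
  have hD : DualPair u v b a := ⟨hu, hvl, hb1, hua, hb2, hva⟩
  have hspan : P = Ideal.span {u, v} := by
    rw [hPij]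
    exact (h₀.span_eq hD (hPij ▸ huP) (hPij ▸ hvP)).symm
  have hm : ∀ k ∈ Finset.univ.filter (fun i => L i ∈ P), L k ∈ Ideal.span {u, v} := by
    intro k hk
    rw [← hspan]; simpa using hk
  have ht : 2 ≤ tOf L P := by
    have : ({i, j} : Finset (Fin d)) ⊆ Finset.univ.filter (fun i => L i ∈ P) := by
      intro k hk
      simp only [Finset.mem_insert, Finset.mem_singleton] at hk
      rcases hk with rfl | rfl <;> simp [hLi, hLj]
    have h2 := Finset.card_le_card this
    rw [Finset.card_pair hij] at h2
    unfold tOf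
    convert h2
  have hsup : Ideal.span {u} ⊔ P ^ (tOf L P - 1) = Ideal.span {u, v ^ (tOf L P - 1)} := by
    rw [← span_sup_pow, ← hspan]
  refine ⟨v, b, hD, hspan, hsup, ?_, ht, ?_, ?_⟩
  · rw [hsup]
    exact (span_local _ ⟨i, by simp [hLi]⟩ L hD (fun k _ => hhom k) hm (fun k _ => ha k)).symm
  · exact euler_local _ L hD (fun k _ => hhom k) hm
  · exact dir_local _ L hD (fun k _ => hhom k) hm

end arrangement

end helpers

/-- Let `K` have characteristic zero and let `A` be a hyperplane
arrangement of `d ≥ 2` hyperplanes in `ℙⁿ`, given by pairwise non-proportional linear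
forms `L i` with `f_A = Π L i`.  For a general linear form `ℓ`, the general residual
`r_A = (f_A, ∂f_A/∂ℓ) : Jac(f_A)` has minimal primary decomposition
`r_A = ⋂_{P ∈ S(A)} (ℓ_P, I_P^{t_P − 1})`, where `ℓ_P` is a (nonzero) linear form lying
in `I_P` and vanishing at the dual point `ℓ∨`, and `(ℓ_P, I_P^{t_P−1}) = (ℓ_P) + I_P^{t_P−1}`
is primary with radical `I_P`.  In particular `√r_A = ⋂_{P ∈ S(A)} I_P`. -/
theorem stmt_5 {K : Type*} [Field K] [CharZero K] {n d : ℕ} (hn : 1 ≤ n) (hd : 2 ≤ d)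
    (L : Fin d → MvPolynomial (Fin (n + 1)) K)
    (hhom : ∀ i, (L i).IsHomogeneous 1) (hne : ∀ i, L i ≠ 0)
    (hprop : ∀ i j, i ≠ j → ∀ c : K, L i ≠ c • L j) :
    ∃ p : MvPolynomial (Fin (n + 1)) K, p ≠ 0 ∧
      ∀ a : Fin (n + 1) → K, eval a p ≠ 0 →
        ∀ lp : Ideal (MvPolynomial (Fin (n + 1)) K) → MvPolynomial (Fin (n + 1)) K,
          (∀ P ∈ singSupp L,
            lp P ≠ 0 ∧ (lp P).IsHomogeneous 1 ∧ lp P ∈ P ∧ eval a (lp P) = 0) →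
          ((Ideal.span {∏ i, L i, lderiv a (∏ i, L i)}).colon (jacobianIdeal (∏ i, L i)) =
            ⨅ P ∈ singSupp L, (Ideal.span {lp P} ⊔ P ^ (tOf L P - 1))) ∧
          (∀ P ∈ singSupp L,
            (Ideal.span {lp P} ⊔ P ^ (tOf L P - 1)).IsPrimary ∧
            (Ideal.span {lp P} ⊔ P ^ (tOf L P - 1)).radical = P) ∧
          (∀ P ∈ singSupp L,
            ¬ (⨅ P' ∈ singSupp L \ {P}, (Ideal.span {lp P'} ⊔ P' ^ (tOf L P' - 1))) ≤
              (Ideal.span {lp P} ⊔ P ^ (tOf L P - 1))) ∧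
          ((Ideal.span {∏ i, L i, lderiv a (∏ i, L i)}).colon
              (jacobianIdeal (∏ i, L i))).radical = ⨅ P ∈ singSupp L, P := by
  classical
  refine ⟨∏ i, L i, Finset.prod_ne_zero_iff.2 fun i _ => hne i, ?_⟩
  intro a hfa lp hlp
  have ha : ∀ i, eval a (L i) ≠ 0 := by
    rw [map_prod] at hfa
    exact fun i => Finset.prod_ne_zero_iff.1 hfa i (Finset.mem_univ i)
  rw [lderiv_eq_dirD]
  have hprim : ∀ P ∈ singSupp L,
      (Ideal.span {lp P} ⊔ P ^ (tOf L P - 1)).radical = P ∧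
      ∀ x y, x * y ∈ Ideal.span {lp P} ⊔ P ^ (tOf L P - 1) → y ∉ P →
        x ∈ Ideal.span {lp P} ⊔ P ^ (tOf L P - 1) := by
    intro P hP
    have hPp := singSupp_prime hhom hprop hP
    obtain ⟨h0, h1, h2, h3⟩ := hlp P hP
    obtain ⟨v, b, hD, hspan, hsup, -, ht, -, -⟩ :=
      local_data hd hhom hprop ha hP h0 h1 h2 h3
    constructor
    · apply le_antisymm
      · rw [hPp.radical_le_iff]
        refine sup_le ?_ (Ideal.pow_le_self (by omega))
        rwa [Ideal.span_singleton_le_iff_mem]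
      · intro x hx
        exact ⟨tOf L P - 1, Ideal.mem_sup_right (Ideal.pow_mem_pow hx _)⟩
    · intro x y hxy hy
      rw [hsup] at hxy ⊢
      rw [hspan] at hy
      exact primary_aux hD.prime hD.not_dvd hD.isPrime _ hxy hy
  have hcolon : (Ideal.span {∏ i, L i, dirD a (∏ i, L i)}).colon
      (jacobianIdeal (∏ i, L i)) =
      ⨅ P ∈ singSupp L, (Ideal.span {lp P} ⊔ P ^ (tOf L P - 1)) := by
    apply le_antisymm
    · refine le_iInf₂ fun P hP => ?_
      intro g hg
      rw [Submodule.mem_colon] at hg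
      have hPp := singSupp_prime hhom hprop hP
      obtain ⟨h0, h1, h2, h3⟩ := hlp P hP
      obtain ⟨v, b, hD, hspan, hsup, hsup', ht, heul, -⟩ :=
        local_data hd hhom hprop ha hP h0 h1 h2 h3
      have hb : dirD b (∏ i, L i) ∈ jacobianIdeal (∏ i, L i) := by
        rw [← lderiv_eq_dirD, lderiv]
        refine Ideal.sum_mem _ fun i _ => ?_
        rw [MvPolynomial.smul_eq_C_mul]
        exact Ideal.mul_mem_left _ _ (Ideal.subset_span ⟨i, rfl⟩)
      have hgb := hg _ hb
      rw [smul_eq_mul, ← prodIn_mul_prodOut P] at hgb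
      have hgG := colon_local_le (by
        have : tOf L P ≠ 0 := by omega
        exact_mod_cast this) heul (relPrime_sub hd hhom hprop ha _) hgb
      rw [← hsup'] at hgG
      refine (hprim P hP).2 _ _ hgG ?_
      intro hG
      obtain ⟨k, hk, hkP⟩ := hPp.prod_mem_iff.1 hG
      simp only [Finset.mem_filter] at hk
      exact hk.2 hkP
    · intro g hg
      rw [jacobianIdeal, Ideal.colon_span, Submodule.mem_colon]
      rintro _ ⟨e, rfl⟩
      simp only [smul_eq_mul]
      apply unmixed hd hhom hprop ha
      intro P hP
      obtain ⟨h0, h1, h2, h3⟩ := hlp P hP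
      obtain ⟨v, b, hD, hspan, hsup, hsup', ht, heul, he⟩ :=
        local_data hd hhom hprop ha hP h0 h1 h2 h3
      have hgP : g ∈ Ideal.span {lp P} ⊔ P ^ (tOf L P - 1) := by
        simp only [Submodule.mem_iInf] at hg
        exact hg P hP
      rw [hsup'] at hgP
      rw [pderiv_eq_dirD]
      have := colon_local_ge (G := prodOut L P) heul (he (Pi.single e 1)) hgP
      rwa [prodIn_mul_prodOut] at this
  refine ⟨hcolon, ?_, ?_, ?_⟩
  · intro P hP
    refine ⟨?_, (hprim P hP).1⟩
    rw [Ideal.isPrimary_iff]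
    refine ⟨?_, ?_⟩
    · intro htop
      have := (hprim P hP).1
      rw [htop, Ideal.radical_top] at this
      exact (singSupp_prime hhom hprop hP).ne_top this.symm
    · intro x y hxy
      rw [(hprim P hP).1]
      by_cases hy : y ∈ P
      · exact Or.inr hy
      · exact Or.inl ((hprim P hP).2 x y hxy hy)
  · intro P hP hle
    have hPp := singSupp_prime hhom hprop hP
    have hfin : (singSupp L \ {P}).Finite := singSupp_finite.subset Set.diff_subset
    have hle' : hfin.toFinset.inf (fun P' => Ideal.span {lp P'} ⊔ P' ^ (tOf L P' - 1)) ≤ P := by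
      rw [Finset.inf_eq_iInf]
      simp only [Set.Finite.mem_toFinset]
      refine hle.trans ?_
      conv_rhs => rw [← (hprim P hP).1]
      exact Ideal.le_radical
    obtain ⟨P', hP', hP'le⟩ := hPp.inf_le'.1 hle'
    rw [Set.Finite.mem_toFinset] at hP'
    rw [← hPp.radical_le_iff, (hprim P' hP'.1).1] at hP'le
    exact hP'.2 (singSupp_eq_of_le hhom hprop hP hP'.1 hP'le)
  · rw [hcolon]
    apply le_antisymm
    · refine le_iInf₂ fun P hP => ?_
      refine le_trans (Ideal.radical_mono (iInf₂_le P hP)) (hprim P hP).1.le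
    · intro x hx
      simp only [Submodule.mem_iInf] at hx
      refine ⟨d, ?_⟩
      simp only [Submodule.mem_iInf]
      intro P hP
      have hdt : tOf L P - 1 ≤ d := by
        have : tOf L P ≤ d := by
          unfold tOf
          exact (Finset.card_le_univ _).trans (by simp)
        omega
      exact Ideal.mem_sup_right (Ideal.pow_le_pow_right hdt (Ideal.pow_mem_pow (hx P hP) d))
end

section
/- Let K have characteristic zero, let A be a hyperplane arrangement of d ≥ 2 hyperplanes in ℙⁿ, and let H ⊂ ℙⁿ be a hyperplane not in A, defined by a linear form x ∈ S. Then for a general linear form ℓ (general simultaneously for A and for A ∪ {H}), the general residuals with respect to ℓ satisfy r_{A∪{H}} : (x) = r_A. -/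
open MvPolynomial

/-- The general residual of the arrangement with defining polynomial `f` with respect to
the linear form with coefficient vector `a`: `r = (f, ∂f/∂ℓ) : Jac(f)`. -/
noncomputable def genResidual {K : Type*} [CommRing K] {m : ℕ} (a : Fin m → K)
    (f : MvPolynomial (Fin m) K) : Ideal (MvPolynomial (Fin m) K) :=
  (Ideal.span {f, lderiv a f}).colon (jacobianIdeal f)

theorem mem_genResidual {K : Type*} [Field K] {m : ℕ} (a : Fin m → K)
    (f s : MvPolynomial (Fin m) K) :
    s ∈ genResidual a f ↔ ∀ i, s * pderiv i f ∈ Ideal.span {f, lderiv a f} := by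
  unfold genResidual jacobianIdeal
  rw [Submodule.mem_colon]
  constructor
  · intro h i
    exact h _ (Ideal.subset_span ⟨i, rfl⟩)
  · intro h t ht
    rw [SetLike.mem_coe] at ht
    induction ht using Submodule.span_induction with
    | mem t ht => obtain ⟨i, rfl⟩ := ht; exact h i
    | zero => simp
    | add t u _ _ ht hu => rw [smul_add]; exact Ideal.add_mem _ ht hu
    | smul r t _ ht => rw [smul_comm]; exact Ideal.mul_mem_left _ _ ht

theorem lderiv_mul {K : Type*} [Field K] {m : ℕ} (a : Fin m → K)
    (f g : MvPolynomial (Fin m) K) :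
    lderiv a (f * g) = lderiv a f * g + f * lderiv a g := by
  unfold lderiv
  rw [Finset.sum_mul, Finset.mul_sum, ← Finset.sum_add_distrib]
  refine Finset.sum_congr rfl fun i _ => ?_
  rw [Derivation.leibniz]
  simp only [smul_eq_mul, MvPolynomial.smul_eq_C_mul]
  ring

theorem lderiv_linear {K : Type*} [Field K] {m : ℕ} (a : Fin m → K)
    (x : MvPolynomial (Fin m) K) (hx : x.IsHomogeneous 1) :
    lderiv a x = C (eval a x) := by
  have h : ∀ i, ∃ c : K, pderiv i x = C c := fun i =>
    ⟨_, totalDegree_eq_zero_iff_eq_C.1 ((totalDegree_zero_iff_isHomogeneous _).2 hx.pderiv)⟩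
  choose c hc using h
  have e := congrArg (eval a) hx.sum_X_mul_pderiv
  simp only [hc, map_sum, map_mul, eval_X, eval_C, one_smul] at e
  rw [← e]
  simp [lderiv, hc, smul_eq_C_mul]

theorem linear_prime {K : Type*} [Field K] {m : ℕ}
    (x : MvPolynomial (Fin m) K) (hx : x.IsHomogeneous 1) (hx0 : x ≠ 0) : Prime x := by
  refine Irreducible.prime (irreducible_of_totalDegree_eq_one (hx.totalDegree hx0) ?_)
  intro c hc
  rw [isUnit_iff_ne_zero]
  rintro rfl
  apply hx0
  ext i
  simpa using hc i

theorem linear_not_dvd {K : Type*} [Field K] {m : ℕ}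
    (x y : MvPolynomial (Fin m) K) (hx : x.IsHomogeneous 1) (hx0 : x ≠ 0)
    (hy : y.IsHomogeneous 1) (hy0 : y ≠ 0) (h : ∀ c : K, x ≠ c • y) : ¬ x ∣ y := by
  rintro ⟨q, rfl⟩
  have hq0 : q ≠ 0 := right_ne_zero_of_mul hy0
  have e := totalDegree_mul_of_isDomain hx0 hq0
  rw [hy.totalDegree hy0, hx.totalDegree hx0] at e
  obtain ⟨c, rfl⟩ : ∃ c : K, q = C c := ⟨_, totalDegree_eq_zero_iff_eq_C.1 (by omega)⟩
  have hc : c ≠ 0 := by rintro rfl; simp at hq0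
  apply h c⁻¹
  rw [smul_eq_C_mul, mul_left_comm, ← C_mul, inv_mul_cancel₀ hc]
  simp

/-- Let `K` have characteristic zero, let `A` be a hyperplane arrangement
of `d ≥ 2` hyperplanes in `ℙⁿ` (given by pairwise non-proportional linear forms `L i`,
with `f_A = Π L i`), and let `H = V(x)` be a hyperplane not in `A`.  Then for a general
linear form `ℓ` (general simultaneously for `A` and `A ∪ {H}`), the general residuals
with respect to `ℓ` satisfy `r_{A∪{H}} : (x) = r_A`. -/
theorem stmt_6 {K : Type*} [Field K] [CharZero K] {n d : ℕ} (hd : 2 ≤ d)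
    (L : Fin d → MvPolynomial (Fin (n + 1)) K)
    (hhom : ∀ i, (L i).IsHomogeneous 1) (hne : ∀ i, L i ≠ 0)
    (hprop : ∀ i j, i ≠ j → ∀ c : K, L i ≠ c • L j)
    (x : MvPolynomial (Fin (n + 1)) K) (hx : x.IsHomogeneous 1) (hx0 : x ≠ 0)
    (hxnotinA : ∀ i, ∀ c : K, x ≠ c • L i) :
    ∃ p : MvPolynomial (Fin (n + 1)) K, p ≠ 0 ∧
      ∀ a : Fin (n + 1) → K, eval a p ≠ 0 →
        (genResidual a (x * ∏ i, L i)).colon (Ideal.span {x}) =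
          genResidual a (∏ i, L i) := by
  refine ⟨x, hx0, fun a ha => ?_⟩
  have hxp := linear_prime x hx hx0
  have hf : ¬ x ∣ ∏ i, L i := by
    rw [hxp.dvd_finsetProd_iff]
    rintro ⟨i, -, hi⟩
    exact linear_not_dvd x (L i) hx hx0 (hhom i) (hne i) (hxnotinA i) hi
  generalize (∏ i, L i) = f at hf
  have hu : IsUnit (C (eval a x) : MvPolynomial (Fin (n + 1)) K) :=
    (isUnit_iff_ne_zero.2 ha).map C
  have hxu : ¬ x ∣ C (eval a x) := fun h => hxp.not_unit (isUnit_of_dvd_unit h hu)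
  have hD : lderiv a (x * f) = C (eval a x) * f + x * lderiv a f := by
    rw [lderiv_mul, lderiv_linear a x hx]
  have key : ∀ y, x ^ 2 * y ∈ Ideal.span {x * f, lderiv a (x * f)} ↔
      y ∈ Ideal.span {f, lderiv a f} := by
    intro y
    rw [hD, Ideal.mem_span_pair, Ideal.mem_span_pair]
    generalize lderiv a f = h
    generalize (C (eval a x) : MvPolynomial (Fin (n + 1)) K) = u at hxu
    constructor
    · rintro ⟨α, β, e⟩
      have h1 : x ∣ β * (u * f) := ⟨x * y - α * f - β * h, by linear_combination e⟩
      have h2 : x ∣ β := by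
        rcases hxp.dvd_or_dvd h1 with h | h
        · exact h
        · rcases hxp.dvd_or_dvd h with h | h
          · exact absurd h hxu
          · exact absurd h hf
      obtain ⟨β', rfl⟩ := h2
      have e2 : α * f + β' * (u * f + x * h) = x * y :=
        mul_left_cancel₀ hx0 (by linear_combination e)
      have h3 : x ∣ (α + β' * u) * f := ⟨y - β' * h, by linear_combination e2⟩
      obtain ⟨γ, hγ⟩ := (hxp.dvd_or_dvd h3).resolve_right hf
      exact ⟨γ, β', mul_left_cancel₀ hx0 (by linear_combination e2 - f * hγ)⟩
    · rintro ⟨γ, β, e⟩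
      exact ⟨γ * x - β * u, β * x, by linear_combination x ^ 2 * e⟩
  ext s
  rw [Ideal.mem_colon_span_singleton, mem_genResidual, mem_genResidual]
  refine forall_congr' fun i => ?_
  rw [← key]
  have hm : s * pderiv i x * (x * f) ∈ Ideal.span {x * f, lderiv a (x * f)} :=
    Ideal.mul_mem_left _ _ (Ideal.subset_span (by simp))
  have e : s * x * pderiv i (x * f) = x ^ 2 * (s * pderiv i f) + s * pderiv i x * (x * f) := by
    rw [Derivation.leibniz]
    simp only [smul_eq_mul]
    ring
  rw [e]
  exact Ideal.add_mem_iff_left _ hm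
end

section
/- Let K have characteristic zero and let A = A(f_A) be a hyperplane arrangement of d ≥ 2 hyperplanes in ℙⁿ, n ≥ 2. Let ℓ be a general linear form with dual point Q = ℓ∨, and let r_A = (f_A, ∂f_A/∂ℓ) : Jac(f_A) be the general residual. Then: (i) every homogeneous element g ∈ r_A of degree at most d − 2 vanishes at Q, i.e. [r_A]_j = [r_A ∩ I_Q]_j for all j ≤ d − 2; and (ii) r_A = (r_A ∩ I_Q) + (∂f_A/∂ℓ), while (∂f_A/∂ℓ)(Q) ≠ 0, so that ∂f_A/∂ℓ belongs to a minimal generating set of r_A. -/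
open MvPolynomial

/-- The homogeneous (prime) ideal `I_Q` of the point `Q` with coordinate vector `a`,
generated by the linear forms vanishing at `Q`. -/
noncomputable def pointIdeal {K : Type*} [CommRing K] {m : ℕ} (a : Fin m → K) :
    Ideal (MvPolynomial (Fin m) K) :=
  Ideal.span {h : MvPolynomial (Fin m) K | h.IsHomogeneous 1 ∧ eval a h = 0}

/-- The irrelevant maximal ideal `𝔪 = (x₀, …, xₙ)`. -/
noncomputable def irrelevant (K : Type*) [CommRing K] (m : ℕ) :
    Ideal (MvPolynomial (Fin m) K) :=
  Ideal.span (Set.range X)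

section helpers

theorem aux_hc_mul {K : Type*} [Field K] {m : ℕ} (p q : MvPolynomial (Fin m) K) (j k : ℕ)
    (hq : q.IsHomogeneous k) :
    homogeneousComponent (j + k) (p * q) = homogeneousComponent j p * q := by
  let _ : GradedAlgebra (homogeneousSubmodule (Fin m) K) := gradedAlgebra
  have := DirectSum.coe_decompose_mul_add_of_right_mem (homogeneousSubmodule (Fin m) K)
    (i := j) (j := k) (a := p) (b := q) hq
  exact (decomposition.decompose'_apply _ _).symm.trans
    (this.trans (congrArg (· * q) (decomposition.decompose'_apply _ _)))

theorem aux_hc_mem {K : Type*} [Field K] {m : ℕ} {I : Ideal (MvPolynomial (Fin m) K)}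
    {s : Set (MvPolynomial (Fin m) K)} (hI : I = Ideal.span s)
    (hs : ∀ x ∈ s, ∃ k, x.IsHomogeneous k) {p : MvPolynomial (Fin m) K} (hp : p ∈ I) (j : ℕ) :
    homogeneousComponent j p ∈ I := by
  subst hI
  let _ : GradedAlgebra (homogeneousSubmodule (Fin m) K) := gradedAlgebra
  have h : (Ideal.span s).IsHomogeneous (homogeneousSubmodule (Fin m) K) :=
    Ideal.homogeneous_span _ _ hs
  exact homogeneousComponent_mem_of_mem h hp j

theorem aux_lderiv_hom {K : Type*} [Field K] {m k : ℕ} (v : Fin m → K)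
    {f : MvPolynomial (Fin m) K} (hf : f.IsHomogeneous k) : (lderiv v f).IsHomogeneous (k - 1) := by
  unfold lderiv
  refine IsHomogeneous.sum _ _ _ fun i _ => ?_
  rw [smul_eq_C_mul]
  exact (hf.pderiv (i := i)).C_mul _

theorem aux_lderiv_mem {K : Type*} [Field K] {m : ℕ} (v : Fin m → K)
    (f : MvPolynomial (Fin m) K) : lderiv v f ∈ jacobianIdeal f := by
  unfold lderiv
  refine Ideal.sum_mem _ fun i _ => ?_
  rw [smul_eq_C_mul]
  exact Ideal.mul_mem_left _ _ (Ideal.subset_span ⟨i, rfl⟩)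

/-- membership in the residual in terms of the partial derivatives -/
theorem aux_mem_res {K : Type*} [Field K] {m : ℕ} (a : Fin m → K)
    (f g : MvPolynomial (Fin m) K) :
    g ∈ genResidual a f ↔ ∀ i, g * pderiv i f ∈ Ideal.span {f, lderiv a f} := by
  unfold genResidual
  rw [Submodule.mem_colon]
  constructor
  · intro h i
    exact h _ (Ideal.subset_span ⟨i, rfl⟩)
  · intro h s hs
    have hs' : s ∈ jacobianIdeal f := hs
    unfold jacobianIdeal at hs'
    rw [smul_eq_mul]
    induction hs' using Submodule.span_induction with
    | mem x hx => obtain ⟨i, rfl⟩ := hx; exact h i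
    | zero => simp
    | add x y hx hy h1 h2 => rw [mul_add]; exact Ideal.add_mem _ (h1 hx) (h2 hy)
    | smul c x hx h1 =>
      have := Ideal.mul_mem_left _ c (h1 hx)
      rw [smul_eq_mul]
      convert this using 1
      ring

theorem aux_res_hom {K : Type*} [Field K] {m k : ℕ} (a : Fin m → K)
    {f g : MvPolynomial (Fin m) K} (hf : f.IsHomogeneous k) (hg : g ∈ genResidual a f) (j : ℕ) :
    homogeneousComponent j g ∈ genResidual a f := by
  rw [aux_mem_res] at hg ⊢
  intro i
  rw [← aux_hc_mul _ _ j (k - 1) hf.pderiv]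
  refine aux_hc_mem rfl ?_ (hg i) _
  rintro x (rfl | rfl)
  · exact ⟨_, hf⟩
  · exact ⟨_, aux_lderiv_hom a hf⟩

/-- restriction to the line `a + t v` -/
noncomputable def auxLine {K : Type*} [Field K] {m : ℕ} (a v : Fin m → K) :
    MvPolynomial (Fin m) K →ₐ[K] Polynomial K :=
  aeval fun i => Polynomial.C (a i) + Polynomial.C (v i) * Polynomial.X

theorem auxLine_eval_zero {K : Type*} [Field K] {m : ℕ} (a v : Fin m → K)
    (g : MvPolynomial (Fin m) K) : (auxLine a v g).eval 0 = eval a g := by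
  unfold auxLine
  induction g using MvPolynomial.induction_on with
  | C c => simp
  | add p q hp hq => simp [hp, hq]
  | mul_X p i hp => simp [hp]

theorem auxLine_deriv {K : Type*} [Field K] {m : ℕ} (a v : Fin m → K)
    (g : MvPolynomial (Fin m) K) :
    auxLine a v (lderiv v g) = Polynomial.derivative (auxLine a v g) := by
  unfold auxLine lderiv
  induction g using MvPolynomial.induction_on with
  | C c => simp
  | add p q hp hq => simp only [map_add, smul_add, Finset.sum_add_distrib, hp, hq]
  | mul_X p i hp =>
    simp only [Derivation.leibniz, pderiv_X, smul_add, Finset.sum_add_distrib, map_add, map_mul,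
      Polynomial.derivative_mul, ← hp, smul_eq_mul]
    rw [Finset.sum_eq_single i]
    · simp [Finset.mul_sum, Finset.sum_mul, Polynomial.smul_eq_C_mul]
      rw [add_comm]
      congr 1
      · refine Finset.sum_congr rfl fun x _ => by ring
      · ring
    · intro b _ hb
      simp [Pi.single_apply, hb.symm]
    · simp

theorem auxLine_euler {K : Type*} [Field K] {m k : ℕ} (a v : Fin m → K)
    {f : MvPolynomial (Fin m) K} (hf : f.IsHomogeneous k) :
    auxLine a v (lderiv a f) + Polynomial.X * auxLine a v (lderiv v f) =
      (k : Polynomial K) * auxLine a v f := by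
  have h := congrArg (auxLine a v) hf.sum_X_mul_pderiv
  rw [nsmul_eq_mul, map_mul, map_natCast] at h
  rw [← h]
  simp only [lderiv, map_sum, map_smul, map_mul, Finset.mul_sum, ← Finset.sum_add_distrib]
  refine Finset.sum_congr rfl fun i _ => ?_
  have : auxLine a v (X i) = Polynomial.C (a i) + Polynomial.C (v i) * Polynomial.X := by
    simp [auxLine]
  rw [this, Polynomial.smul_eq_C_mul, Polynomial.smul_eq_C_mul]
  ring

theorem auxLine_natDegree {K : Type*} [Field K] {m k : ℕ} (a v : Fin m → K)
    {g : MvPolynomial (Fin m) K} (hg : g.IsHomogeneous k) :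
    (auxLine a v g).natDegree ≤ k := by
  unfold auxLine
  rw [aeval_def, eval₂_eq]
  refine Polynomial.natDegree_sum_le_of_forall_le _ _ fun e he => ?_
  have hk : ∑ i ∈ e.support, e i = k := by
    have := hg (mem_support_iff.mp he)
    rw [Finsupp.weight_apply] at this
    simpa [Finsupp.sum] using this
  refine (Polynomial.natDegree_C_mul_le _ _).trans ?_
  refine (Polynomial.natDegree_prod_le _ _).trans ?_
  rw [← hk]
  refine Finset.sum_le_sum fun i _ => ?_
  refine Polynomial.natDegree_pow_le.trans ?_
  have : (Polynomial.C (a i) + Polynomial.C (v i) * Polynomial.X).natDegree ≤ 1 := by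
    compute_degree
  nlinarith

theorem auxLine_linear {K : Type*} [Field K] {m : ℕ} (a v : Fin m → K)
    {l : MvPolynomial (Fin m) K} (hl : l.IsHomogeneous 1) :
    auxLine a v l = Polynomial.C (eval a l) + Polynomial.C (eval v l) * Polynomial.X := by
  have h1 := auxLine_natDegree a v hl
  have h2 := auxLine_euler a v hl
  have h3 := auxLine_deriv a v l
  have hl' : lderiv v l = C (eval v l) := by
    have h0 : ∀ w : Fin m → K, lderiv w l = C (coeff 0 (lderiv w l)) := fun w =>
      totalDegree_eq_zero_iff_eq_C.mp (by
        have := (aux_lderiv_hom w hl).totalDegree_le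
        omega)
    have he := congrArg (eval v) hl.sum_X_mul_pderiv
    have h4 : eval v (lderiv v l) = eval v l := by
      simpa [lderiv, smul_eval] using he
    rw [h0 v, eval_C] at h4
    rw [h0 v, h4]
  rw [hl'] at h3
  have h5 : auxLine a v (C (eval v l)) = Polynomial.C (eval v l) := by simp [auxLine]
  rw [h5] at h3
  rw [Polynomial.eq_X_add_C_of_natDegree_le_one h1]
  have c0 : (auxLine a v l).coeff 0 = eval a l := by
    rw [Polynomial.coeff_zero_eq_eval_zero, auxLine_eval_zero]
  have c1 : (auxLine a v l).coeff 1 = eval v l := by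
    have := congrArg (fun q => Polynomial.coeff q 0) h3
    simp [Polynomial.coeff_derivative] at this
    exact this.symm
  rw [c0, c1, add_comm]

theorem aux_point {K : Type*} [Field K] {m k : ℕ} {a : Fin m → K} {i₀ : Fin m} (h0 : a i₀ ≠ 0)
    {g : MvPolynomial (Fin m) K} (hg : g.IsHomogeneous k) (h : eval a g = 0) :
    g ∈ pointIdeal a := by
  set ψ : MvPolynomial (Fin m) K →ₐ[K] MvPolynomial (Fin m) K :=
    aeval fun i => C (a i) * (C (a i₀)⁻¹ * X i₀) with hψ
  have h1 : ∀ p, p - ψ p ∈ pointIdeal a := by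
    intro p
    have hx : ∀ i, X i - ψ (X i) ∈ pointIdeal a := by
      intro i
      refine Ideal.subset_span ⟨?_, ?_⟩
      · rw [hψ, aeval_X, ← mul_assoc, ← C_mul]
        exact (isHomogeneous_X _ _).sub ((isHomogeneous_X _ _).C_mul _)
      · simp [hψ, h0]
    induction p using MvPolynomial.induction_on with
    | C c => simp [hψ, MvPolynomial.algebraMap_eq]
    | add p q hp hq =>
      have := Ideal.add_mem _ hp hq
      rw [map_add]
      convert this using 1
      ring
    | mul_X p i hp =>
      have := Ideal.add_mem _ (Ideal.mul_mem_right (X i) _ hp) (Ideal.mul_mem_left _ (ψ p) (hx i))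
      rw [map_mul]
      convert this using 1
      ring
  have h2 : ψ g = C (eval a g) * (C (a i₀)⁻¹ * X i₀) ^ k := by
    rw [hψ, aeval_def, eval₂_eq, eval_eq, map_sum, Finset.sum_mul]
    refine Finset.sum_congr rfl fun e he => ?_
    have hk : ∑ i ∈ e.support, e i = k := by
      have := hg (mem_support_iff.mp he)
      rw [Finsupp.weight_apply] at this
      simpa [Finsupp.sum] using this
    simp only [mul_pow _ (_ * _), Finset.prod_mul_distrib, Finset.prod_pow_eq_pow_sum, hk]
    simp [MvPolynomial.algebraMap_eq, mul_assoc]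
  have := h1 g
  rwa [h2, h, C_0, zero_mul, sub_zero] at this

end helpers

section helpers2

theorem aux_generic {K : Type*} [Field K] [CharZero K] {m d : ℕ}
    (L : Fin d → MvPolynomial (Fin m) K) (hne : ∀ i, L i ≠ 0)
    (hprop : ∀ i j, i ≠ j → ∀ c : K, L i ≠ c • L j)
    (a : Fin m → K) (ha : ∀ i, eval a (L i) ≠ 0) :
    ∃ v : Fin m → K, (∀ i, eval v (L i) ≠ 0) ∧
      ∀ i j, i ≠ j → eval a (L j) * eval v (L i) - eval a (L i) * eval v (L j) ≠ 0 := by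
  classical
  set P : MvPolynomial (Fin m) K := (∏ i, L i) * ∏ i, ∏ j,
    if i = j then 1 else (C (eval a (L j)) * L i - C (eval a (L i)) * L j) with hP
  have hP0 : P ≠ 0 := by
    rw [hP]
    refine mul_ne_zero (Finset.prod_ne_zero_iff.mpr fun i _ => hne i)
      (Finset.prod_ne_zero_iff.mpr fun i _ => Finset.prod_ne_zero_iff.mpr fun j _ => ?_)
    split_ifs with hij
    · exact one_ne_zero
    · intro h0
      apply hprop i j hij ((eval a (L j))⁻¹ * eval a (L i))
      rw [sub_eq_zero] at h0
      rw [mul_smul, smul_eq_C_mul (L j), ← h0, ← smul_eq_C_mul, smul_smul,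
        inv_mul_cancel₀ (ha j), one_smul]
  obtain ⟨v, hv⟩ : ∃ v, eval v P ≠ 0 := by
    by_contra! hcon
    exact hP0 (MvPolynomial.funext fun x => by rw [hcon x, map_zero])
  rw [hP, map_mul, map_prod, map_prod] at hv
  refine ⟨v, fun i => Finset.prod_ne_zero_iff.mp (left_ne_zero_of_mul hv) i (Finset.mem_univ i), ?_⟩
  intro i j hij
  have h1 := Finset.prod_ne_zero_iff.mp (right_ne_zero_of_mul hv) i (Finset.mem_univ i)
  rw [map_prod] at h1
  have h2 := Finset.prod_ne_zero_iff.mp h1 j (Finset.mem_univ j)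
  simpa [hij] using h2

theorem aux_vanish {K : Type*} [Field K] [CharZero K] {m d : ℕ} (hd : 2 ≤ d)
    (L : Fin d → MvPolynomial (Fin m) K)
    (hhom : ∀ i, (L i).IsHomogeneous 1) (hne : ∀ i, L i ≠ 0)
    (hprop : ∀ i j, i ≠ j → ∀ c : K, L i ≠ c • L j)
    (hf : (∏ i, L i).IsHomogeneous d)
    (a : Fin m → K) (ha : ∀ i, eval a (L i) ≠ 0)
    {g : MvPolynomial (Fin m) K} (hg : g ∈ genResidual a (∏ i, L i)) {j : ℕ} (hj : j ≤ d - 2)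
    (hgj : g.IsHomogeneous j) : eval a g = 0 := by
  obtain ⟨v, hv, hav⟩ := aux_generic L hne hprop a ha
  set f := ∏ i, L i with hfdef
  have h1 : g * lderiv v f ∈ Ideal.span {f, lderiv a f} :=
    (Submodule.mem_colon.mp hg) _ (aux_lderiv_mem v f)
  obtain ⟨A, B, hAB⟩ := Ideal.mem_span_pair.mp h1
  have h2 := congrArg (homogeneousComponent (j + (d - 1))) hAB
  rw [map_add, aux_hc_mul B _ _ _ (aux_lderiv_hom a hf), aux_hc_mul g _ _ _ (aux_lderiv_hom v hf),
    homogeneousComponent_eq_self hgj] at h2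
  have h3 : homogeneousComponent (j + (d - 1)) (A * f) ∈ Ideal.span {f} := by
    refine aux_hc_mem rfl ?_ (Ideal.mul_mem_left _ _ (Ideal.mem_span_singleton_self f)) _
    rintro x rfl
    exact ⟨_, hf⟩
  obtain ⟨A', hA'⟩ := Ideal.mem_span_singleton.mp h3
  rw [hA'] at h2
  set B' := homogeneousComponent j B
  have hB' : B'.IsHomogeneous j := homogeneousComponent_isHomogeneous _ _
  have h4 := congrArg (auxLine a v) h2
  simp only [map_add, map_mul] at h4
  have h5 := auxLine_euler a v hf
  have hder := auxLine_deriv a v f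
  set F := auxLine a v f with hF
  rw [hder] at h4 h5
  have hFprod : F = ∏ i, (Polynomial.C (eval a (L i)) +
      Polynomial.C (eval v (L i)) * Polynomial.X) := by
    rw [hF, hfdef, map_prod]
    exact Finset.prod_congr rfl fun i _ => auxLine_linear a v (hhom i)
  have hdeg1 : ∀ i, (Polynomial.C (eval a (L i)) +
      Polynomial.C (eval v (L i)) * Polynomial.X).natDegree = 1 := by
    intro i
    rw [add_comm]
    exact Polynomial.natDegree_linear (hv i)
  have hdeg : F.natDegree = d := by
    rw [hFprod, Polynomial.natDegree_prod]
    · simp [hdeg1]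
    · intro i _ h0
      have := hdeg1 i
      rw [h0] at this
      simp at this
  have hsep : F.Separable := by
    rw [hFprod]
    refine Polynomial.separable_prod ?_ ?_
    · intro i k hik
      have hne0 := hav i k hik
      set c := eval a (L k) * eval v (L i) - eval a (L i) * eval v (L k) with hc
      refine ⟨- Polynomial.C (c⁻¹ * eval v (L k)), Polynomial.C (c⁻¹ * eval v (L i)), ?_⟩
      have : (Polynomial.C (c⁻¹ * c) : Polynomial K) = 1 := by
        rw [inv_mul_cancel₀ hne0, Polynomial.C_1]
      rw [← this]
      conv_rhs => rw [hc]
      simp only [map_mul, map_sub]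
      ring
    · intro i
      refine ⟨0, Polynomial.C (eval v (L i))⁻¹, ?_⟩
      simp [← Polynomial.C_mul, inv_mul_cancel₀ (hv i)]
  have hdvd : F ∣ auxLine a v g + Polynomial.X * auxLine a v B' := by
    have hcop : IsCoprime F (Polynomial.derivative F) := hsep
    refine hcop.dvd_of_dvd_mul_right ?_
    refine ⟨auxLine a v A' + auxLine a v B' * d, ?_⟩
    linear_combination (-1 : Polynomial K) * h4 + auxLine a v B' * h5
  have hzero : auxLine a v g + Polynomial.X * auxLine a v B' = 0 := by
    by_contra hnz
    have hle := Polynomial.natDegree_le_of_dvd hdvd hnz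
    have b1 := auxLine_natDegree a v hgj
    have b2 := auxLine_natDegree a v hB'
    have b3 := Polynomial.natDegree_add_le (auxLine a v g) (Polynomial.X * auxLine a v B')
    have b4 := Polynomial.natDegree_mul_le (p := Polynomial.X) (q := auxLine a v B')
    rw [Polynomial.natDegree_X] at b4
    rw [hdeg] at hle
    rcases le_max_iff.mp b3 with h | h <;> omega
  have := congrArg (Polynomial.eval 0) hzero
  simpa [auxLine_eval_zero] using this

end helpers2

/-- Let `K` have characteristic zero and let `A` be an arrangement of
`d ≥ 2` hyperplanes in `ℙⁿ`, `n ≥ 2`, given by pairwise non-proportional linear forms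
`L i` with `f_A = Π L i`.  Let `ℓ` be a general linear form with dual point `Q = ℓ∨`
(coordinates `a`), and let `r_A = (f_A, ∂f_A/∂ℓ) : Jac(f_A)`.  Then:
(i) every homogeneous element of `r_A` of degree `≤ d − 2` lies in `I_Q`, i.e.
`[r_A]_j = [r_A ∩ I_Q]_j` for `j ≤ d − 2`; and
(ii) `r_A = (r_A ∩ I_Q) + (∂f_A/∂ℓ)` and `(∂f_A/∂ℓ)(Q) ≠ 0`, so `∂f_A/∂ℓ` belongs to a
minimal generating set of `r_A` (it does not lie in `𝔪·r_A`). -/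
theorem stmt_9 {K : Type*} [Field K] [CharZero K] {n d : ℕ} (hn : 2 ≤ n) (hd : 2 ≤ d)
    (L : Fin d → MvPolynomial (Fin (n + 1)) K)
    (hhom : ∀ i, (L i).IsHomogeneous 1) (hne : ∀ i, L i ≠ 0)
    (hprop : ∀ i j, i ≠ j → ∀ c : K, L i ≠ c • L j) :
    ∃ p : MvPolynomial (Fin (n + 1)) K, p ≠ 0 ∧
      ∀ a : Fin (n + 1) → K, eval a p ≠ 0 →
        (∀ g ∈ genResidual a (∏ i, L i), ∀ j : ℕ, j ≤ d - 2 → g.IsHomogeneous j →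
          g ∈ pointIdeal a) ∧
        (genResidual a (∏ i, L i) =
          (genResidual a (∏ i, L i) ⊓ pointIdeal a) ⊔
            Ideal.span {lderiv a (∏ i, L i)}) ∧
        eval a (lderiv a (∏ i, L i)) ≠ 0 ∧
        lderiv a (∏ i, L i) ∉ irrelevant K (n + 1) * genResidual a (∏ i, L i) := by
  have hf : (∏ i, L i).IsHomogeneous d := by
    simpa using IsHomogeneous.prod Finset.univ L (fun _ => 1) fun i _ => hhom i
  refine ⟨∏ i, L i, Finset.prod_ne_zero_iff.mpr fun i _ => hne i, fun a hap => ?_⟩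
  have ha : ∀ i, eval a (L i) ≠ 0 := by
    intro i
    rw [map_prod] at hap
    exact Finset.prod_ne_zero_iff.mp hap i (Finset.mem_univ i)
  have hvan : ∀ g ∈ genResidual a (∏ i, L i), ∀ j : ℕ, j ≤ d - 2 → g.IsHomogeneous j →
      eval a g = 0 := fun g hg j hj hgj => aux_vanish hd L hhom hne hprop hf a ha hg hj hgj
  set f := ∏ i, L i with hfdef
  obtain ⟨i₀, h0⟩ : ∃ i₀, a i₀ ≠ 0 := by
    by_contra! hcon
    apply hap
    have ha0 : a = 0 := funext hcon
    have he := congrArg (eval a) hf.sum_X_mul_pderiv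
    have hd0 : (d : K) ≠ 0 := by exact_mod_cast (by omega : d ≠ 0)
    have : (d : K) * eval a f = 0 := by
      rw [nsmul_eq_mul, map_mul, map_natCast] at he
      rw [← he]
      simp [ha0]
    exact (mul_eq_zero.mp this).resolve_left hd0
  have hEval : eval a (lderiv a f) ≠ 0 := by
    have he := congrArg (eval a) hf.sum_X_mul_pderiv
    have hd0 : (d : K) ≠ 0 := by exact_mod_cast (by omega : d ≠ 0)
    have h4 : eval a (lderiv a f) = d * eval a f := by
      simpa [lderiv, smul_eval] using he
    rw [h4]
    exact mul_ne_zero hd0 hap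
  have hDhom := aux_lderiv_hom a hf
  have hDmem : lderiv a f ∈ genResidual a f := by
    rw [aux_mem_res]
    intro i
    exact Ideal.mul_mem_right _ _ (Ideal.subset_span (by simp))
  refine ⟨fun g hg j hj hgj => aux_point h0 hgj (hvan g hg j hj hgj), ?_, hEval, ?_⟩
  · apply le_antisymm
    · intro g hg
      rw [← sum_homogeneousComponent g]
      refine Ideal.sum_mem _ fun j _ => ?_
      have hgj := aux_res_hom a hf hg j
      have hgh := homogeneousComponent_isHomogeneous j g
      set q := homogeneousComponent j g
      by_cases hj : j ≤ d - 2
      · exact Ideal.mem_sup_left ⟨hgj, aux_point h0 hgh (hvan q hgj j hj hgh)⟩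
      · set c : K := eval a q * (eval a (lderiv a f))⁻¹ * ((a i₀) ^ (j - (d - 1)))⁻¹ with hc
        set u : MvPolynomial (Fin (n + 1)) K := C c * X i₀ ^ (j - (d - 1)) * lderiv a f with hu
        have hu1 : u ∈ Ideal.span {lderiv a f} :=
          Ideal.mul_mem_left _ _ (Ideal.mem_span_singleton_self _)
        have hu2 : u ∈ genResidual a f := Ideal.mul_mem_left _ _ hDmem
        have hu3 : u.IsHomogeneous j := by
          have h := (((isHomogeneous_X K i₀).pow (j - (d - 1))).C_mul c).mul hDhom
          have hjj : 1 * (j - (d - 1)) + (d - 1) = j := by omega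
          rwa [hjj] at h
        have hu4 : eval a u = eval a q := by
          have hpow : (a i₀) ^ (j - (d - 1)) ≠ 0 := pow_ne_zero _ h0
          simp only [hu, hc, map_mul, map_pow, eval_C, eval_X]
          field_simp
        rw [← sub_add_cancel q u]
        refine Ideal.add_mem _ (Ideal.mem_sup_left ⟨Ideal.sub_mem _ hgj hu2, ?_⟩)
          (Ideal.mem_sup_right hu1)
        exact aux_point h0 (hgh.sub hu3) (by rw [map_sub, hu4, sub_self])
    · refine sup_le inf_le_left ?_
      rw [Ideal.span_le, Set.singleton_subset_iff]
      exact hDmem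
  · intro hmem
    apply hEval
    have key : ∀ x ∈ irrelevant K (n + 1) * genResidual a f,
        eval a (homogeneousComponent (d - 2 + 1) x) = 0 := by
      intro x hx
      induction hx using Submodule.mul_induction_on' with
      | mem_mul_mem y hy z hz =>
        unfold irrelevant at hy
        induction hy using Submodule.span_induction generalizing z with
        | mem y hy =>
          obtain ⟨i, rfl⟩ := hy
          rw [mul_comm, aux_hc_mul _ _ _ _ (isHomogeneous_X K i), map_mul,
            hvan _ (aux_res_hom a hf hz _) _ le_rfl (homogeneousComponent_isHomogeneous _ _),
            zero_mul]
        | zero => simp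
        | add y₁ y₂ _ _ h1 h2 => rw [add_mul, map_add, map_add, h1 z hz, h2 z hz, add_zero]
        | smul c y _ h1 =>
          have := h1 (c * z) (Ideal.mul_mem_left _ _ hz)
          rw [smul_eq_mul]
          rwa [show c * y * z = y * (c * z) by ring]
      | add x _ y _ h1 h2 => rw [map_add, map_add, h1, h2, add_zero]
    have := key _ hmem
    rw [show d - 2 + 1 = d - 1 by omega] at this
    rwa [homogeneousComponent_eq_self hDhom] at this
end

section
/- Let A be an arrangement of d ≥ 3 distinct lines in ℙ² over a field K of characteristic zero, with global Tjurina number τ(A) := Σ_{P ∈ S(A)} (t_P − 1)² (= deg Jac(f_A)). If the d lines of A are not all concurrent, then τ(A) ≤ d² − 3d + 3, and equality holds if and only if some d − 1 of the lines of A are concurrent (but not all d). -/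
open Classical in
/-- Purely combinatorial part. -/
theorem comb_aux {β : Type*} [SemilatticeInf β] (pt : β → Prop) {d : ℕ}
    (A : Finset β) (hcard : A.card = d) (hd : 3 ≤ d)
    (h1 : ∀ L ∈ A, ∀ M ∈ A, L ≠ M → pt (L ⊓ M))
    (h2 : ∀ P, pt P → ∀ L ∈ A, ∀ M ∈ A, L ≠ M → P ≤ L → P ≤ M → P = L ⊓ M)
    (hnot : ¬ ∃ P, pt P ∧ ∀ L ∈ A, P ≤ L) :
    (∑ P ∈ ((A ×ˢ A).filter (fun p => p.1 ≠ p.2)).image (fun p => p.1 ⊓ p.2),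
        ((A.filter (fun L => P ≤ L)).card - 1) ^ 2) ≤ d ^ 2 - 3 * d + 3 ∧
    ((∑ P ∈ ((A ×ˢ A).filter (fun p => p.1 ≠ p.2)).image (fun p => p.1 ⊓ p.2),
        ((A.filter (fun L => P ≤ L)).card - 1) ^ 2) = d ^ 2 - 3 * d + 3 ↔
      ∃ P, pt P ∧ d - 1 ≤ (A.filter (fun L => P ≤ L)).card) := by
  set S := ((A ×ˢ A).filter (fun p => p.1 ≠ p.2)).image (fun p => p.1 ⊓ p.2) with hS
  set t : β → ℕ := fun P => (A.filter (fun L => P ≤ L)).card with ht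
  have memS : ∀ P, P ∈ S ↔ ∃ L ∈ A, ∃ M ∈ A, L ≠ M ∧ L ⊓ M = P := by
    intro P
    simp only [hS, Finset.mem_image, Finset.mem_filter, Finset.mem_product, Prod.exists]
    constructor
    · rintro ⟨L, M, ⟨⟨hL, hM⟩, hne⟩, h⟩; exact ⟨L, hL, M, hM, hne, h⟩
    · rintro ⟨L, hL, M, hM, hne, h⟩; exact ⟨L, M, ⟨⟨hL, hM⟩, hne⟩, h⟩
  have ptS : ∀ P ∈ S, pt P := by
    intro P hP
    obtain ⟨L, hL, M, hM, hne, rfl⟩ := (memS P).1 hP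
    exact h1 L hL M hM hne
  have t2 : ∀ P ∈ S, 2 ≤ t P := by
    intro P hP
    obtain ⟨L, hL, M, hM, hne, rfl⟩ := (memS P).1 hP
    have : 1 < (A.filter (fun N => L ⊓ M ≤ N)).card :=
      Finset.one_lt_card.2 ⟨L, by simp [hL], M, by simp [hM], hne⟩
    exact this
  have S2 : ∀ P, pt P → 2 ≤ t P → P ∈ S := by
    intro P hP h
    have h : 1 < (A.filter (fun N => P ≤ N)).card := h
    obtain ⟨L, hL, M, hM, hne⟩ := Finset.one_lt_card.1 h
    simp only [Finset.mem_filter] at hL hM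
    exact (memS P).2 ⟨L, hL.1, M, hM.1, hne, (h2 P hP L hL.1 M hM.1 hne hL.2 hM.2).symm⟩
  have td : ∀ P, pt P → t P < d := by
    intro P hP
    by_contra hge
    push Not at hge
    apply hnot
    refine ⟨P, hP, ?_⟩
    have : A.filter (fun L => P ≤ L) = A :=
      Finset.eq_of_subset_of_card_le (Finset.filter_subset _ _) (by rw [hcard]; exact hge)
    intro L hL
    rw [← this] at hL
    exact (Finset.mem_filter.1 hL).2
  -- double count of ordered pairs
  have dc : ∑ P ∈ S, t P * (t P - 1) = d * (d - 1) := by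
    have e : A.offDiag.card = d * (d - 1) := by
      rw [Finset.offDiag_card, hcard, Nat.mul_sub_one]
    rw [← e, Finset.card_eq_sum_card_fiberwise (f := fun p : β × β => p.1 ⊓ p.2) (t := S)]
    · refine Finset.sum_congr rfl fun P hP => ?_
      have : A.offDiag.filter (fun p => p.1 ⊓ p.2 = P) = (A.filter (fun L => P ≤ L)).offDiag := by
        ext ⟨L, M⟩
        simp only [Finset.mem_filter, Finset.mem_offDiag]
        constructor
        · rintro ⟨⟨hL, hM, hne⟩, rfl⟩
          exact ⟨⟨hL, inf_le_left⟩, ⟨hM, inf_le_right⟩, hne⟩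
        · rintro ⟨⟨hL, hPL⟩, ⟨hM, hPM⟩, hne⟩
          exact ⟨⟨hL, hM, hne⟩, (h2 P (ptS P hP) L hL M hM hne hPL hPM).symm⟩
      rw [this, Finset.offDiag_card, Nat.mul_sub_one]
    · rintro ⟨L, M⟩ hp
      have hp := Finset.mem_offDiag.1 (Finset.mem_coe.1 hp)
      exact Finset.mem_coe.2 ((memS _).2 ⟨L, hp.1, M, hp.2.1, hp.2.2, rfl⟩)
  have tau : ∑ P ∈ S, (t P - 1) ^ 2 + ∑ P ∈ S, (t P - 1) = d * (d - 1) := by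
    rw [← dc, ← Finset.sum_add_distrib]
    refine Finset.sum_congr rfl fun P hP => ?_
    obtain ⟨k, hk⟩ := Nat.exists_eq_add_of_le (t2 P hP)
    rw [hk]
    have : 2 + k - 1 = k + 1 := by omega
    rw [this]; ring
  -- local bound at a point
  have low : ∀ Q ∈ S, (t Q - 1) + t Q * (d - t Q) ≤ ∑ P ∈ S, (t P - 1) := by
    intro Q hQ
    rw [← Finset.add_sum_erase S _ hQ]
    refine Nat.add_le_add_left ?_ _
    have e : ((A.filter (fun L => Q ≤ L)) ×ˢ (A.filter (fun L => ¬ Q ≤ L))).card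
        = t Q * (d - t Q) := by
      rw [Finset.card_product]
      have := Finset.card_filter_add_card_filter_not (s := A) (fun L => Q ≤ L)
      rw [hcard] at this
      have h3 : (A.filter (fun L => ¬ Q ≤ L)).card = d - t Q := by
        simp only [ht]; omega
      rw [h3]
    rw [← e, Finset.card_eq_sum_card_fiberwise (f := fun p : β × β => p.1 ⊓ p.2) (t := S.erase Q)]
    · refine Finset.sum_le_sum fun P hP => ?_
      have hPQ := (Finset.mem_erase.1 hP).1
      have hPS := (Finset.mem_erase.1 hP).2
      have key : ∀ L ∈ A, ∀ M ∈ A, Q ≤ L → Q ≤ M → P ≤ L → P ≤ M → L = M := by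
        intro L hL M hM a b c e
        by_contra hne
        exact hPQ ((h2 P (ptS P hPS) L hL M hM hne c e).trans
          (h2 Q (ptS Q hQ) L hL M hM hne a b).symm)
      rcases Finset.eq_empty_or_nonempty
        (((A.filter (fun L => Q ≤ L)) ×ˢ (A.filter (fun L => ¬ Q ≤ L))).filter
          (fun p => p.1 ⊓ p.2 = P)) with h0 | ⟨⟨L0, M0⟩, h0⟩
      · rw [h0]; simp
      · simp only [Finset.mem_filter, Finset.mem_product] at h0
        obtain ⟨⟨⟨hL0, hQL0⟩, -⟩, hP0⟩ := h0
        have hPL0 : P ≤ L0 := hP0 ▸ inf_le_left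
        have : t P - 1 = ((A.filter (fun L => P ≤ L)).erase L0).card := by
          rw [Finset.card_erase_of_mem (by simp [hL0, hPL0])]
        rw [this]
        refine Finset.card_le_card_of_injOn Prod.snd ?_ ?_
        · rintro ⟨L, M⟩ h
          have h := Finset.mem_coe.1 h
          simp only [Finset.mem_filter, Finset.mem_product] at h
          obtain ⟨⟨⟨hL, hQL⟩, hM, hQM⟩, hE⟩ := h
          refine Finset.mem_coe.2 (Finset.mem_erase.2 ⟨?_, ?_⟩)
          · rintro rfl; exact hQM hQL0
          · exact Finset.mem_filter.2 ⟨hM, hE ▸ inf_le_right⟩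
        · rintro ⟨L, M⟩ h ⟨L', M'⟩ h' heq
          have h := Finset.mem_coe.1 h
          have h' := Finset.mem_coe.1 h'
          simp only [Finset.mem_filter, Finset.mem_product] at h h' heq
          have : L = L' := key L h.1.1.1 L' h'.1.1.1 h.1.1.2 h'.1.1.2
            (h.2 ▸ inf_le_left) (h'.2 ▸ inf_le_left)
          rw [this, heq]
    · rintro ⟨L, M⟩ h
      have h := Finset.mem_coe.1 h
      simp only [Finset.mem_filter, Finset.mem_product] at h
      obtain ⟨⟨hL, hQL⟩, hM, hQM⟩ := h
      refine Finset.mem_coe.2 (Finset.mem_erase.2 ⟨?_, ?_⟩)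
      · intro hh
        have hh : L ⊓ M = Q := hh
        exact hQM (hh ▸ inf_le_right)
      · exact (memS _).2 ⟨L, hL, M, hM, by rintro rfl; exact hQM hQL, rfl⟩
  have hnum : d ^ 2 - 3 * d + 3 + (2 * d - 3) = d * (d - 1) := by
    obtain ⟨k, rfl⟩ := Nat.exists_eq_add_of_le hd
    have a : (3 + k) ^ 2 - 3 * (3 + k) = k * (3 + k) := by
      rw [Nat.sub_eq_iff_eq_add (by nlinarith)]; ring
    have b : 2 * (3 + k) - 3 = 2 * k + 3 := by omega
    have c : 3 + k - 1 = k + 2 := by omega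
    rw [a, b, c]; ring
  change (∑ P ∈ S, (t P - 1) ^ 2) ≤ _ ∧ ((∑ P ∈ S, (t P - 1) ^ 2) = _ ↔ ∃ P, pt P ∧ d - 1 ≤ t P)
  by_cases hex : ∃ P, pt P ∧ d - 1 ≤ t P
  · obtain ⟨Q, hQ, hQt⟩ := hex
    have hQd := td Q hQ
    have hQt : t Q = d - 1 := by omega
    have hQS : Q ∈ S := S2 Q hQ (by omega)
    have lo := low Q hQS
    have e1 : d - (d - 1) = 1 := by omega
    rw [hQt, e1] at lo
    have up : ∑ P ∈ S, (t P - 1) ≤ 2 * d - 3 := by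
      have hc : (A.filter (fun L => ¬ Q ≤ L)).card = 1 := by
        have := Finset.card_filter_add_card_filter_not (s := A) (fun L => Q ≤ L)
        have h' : (A.filter (fun L => Q ≤ L)).card = d - 1 := hQt
        omega
      obtain ⟨N, hN⟩ := Finset.card_eq_one.1 hc
      have hN' : ∀ L ∈ A, ¬ Q ≤ L → L = N := by
        intro L hL h
        have : L ∈ A.filter (fun L => ¬ Q ≤ L) := Finset.mem_filter.2 ⟨hL, h⟩
        rw [hN] at this
        exact Finset.mem_singleton.1 this
      have key : ∀ P ∈ S.erase Q, ∀ L ∈ A, ∀ M ∈ A, Q ≤ L → Q ≤ M → P ≤ L → P ≤ M → L = M := by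
        intro P hP L hL M hM a b c e
        have hPQ := (Finset.mem_erase.1 hP).1
        have hPS := (Finset.mem_erase.1 hP).2
        by_contra hne
        exact hPQ ((h2 P (ptS P hPS) L hL M hM hne c e).trans
          (h2 Q (ptS Q hQS) L hL M hM hne a b).symm)
      have hle1 : ∀ P ∈ S.erase Q, t P - 1 ≤ 1 := by
        intro P hP
        have hu := Finset.card_filter_add_card_filter_not (s := A.filter (fun L => P ≤ L))
          (fun L => Q ≤ L)
        have ha : ((A.filter (fun L => P ≤ L)).filter (fun L => Q ≤ L)).card ≤ 1 := by
          refine Finset.card_le_one.2 ?_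
          intro L hL M hM
          simp only [Finset.mem_filter] at hL hM
          exact key P hP L hL.1.1 M hM.1.1 hL.2 hM.2 hL.1.2 hM.1.2
        have hb : ((A.filter (fun L => P ≤ L)).filter (fun L => ¬ Q ≤ L)).card ≤ 1 := by
          refine Finset.card_le_one.2 ?_
          intro L hL M hM
          simp only [Finset.mem_filter] at hL hM
          rw [hN' L hL.1.1 hL.2, hN' M hM.1.1 hM.2]
        simp only [ht]; omega
      have hsub : S.erase Q ⊆ (A.filter (fun L => Q ≤ L)).image (fun L => L ⊓ N) := by
        intro P hP
        obtain ⟨L, hL, M, hM, hne, hE⟩ := (memS P).1 (Finset.mem_erase.1 hP).2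
        have hPL : P ≤ L := hE ▸ inf_le_left
        have hPM : P ≤ M := hE ▸ inf_le_right
        refine Finset.mem_image.2 ?_
        by_cases a : Q ≤ L
        · by_cases b : Q ≤ M
          · exact absurd (key P hP L hL M hM a b hPL hPM) hne
          · exact ⟨L, Finset.mem_filter.2 ⟨hL, a⟩, by rw [← hN' M hM b]; exact hE⟩
        · by_cases b : Q ≤ M
          · exact ⟨M, Finset.mem_filter.2 ⟨hM, b⟩, by
              rw [← hN' L hL a, inf_comm]; exact hE⟩
          · exact absurd ((hN' L hL a).trans (hN' M hM b).symm) hne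
      have hcc : (S.erase Q).card ≤ d - 1 :=
        (Finset.card_le_card hsub).trans (Finset.card_image_le.trans hQt.le)
      have hsum := Finset.sum_le_card_nsmul (S.erase Q) (fun P => t P - 1) 1 hle1
      rw [← Finset.add_sum_erase S _ hQS]
      simp only [smul_eq_mul, mul_one] at hsum
      omega
    have : ∑ P ∈ S, (t P - 1) = 2 * d - 3 := by omega
    have hT : ∑ P ∈ S, (t P - 1) ^ 2 = d ^ 2 - 3 * d + 3 := by omega
    exact ⟨hT.le, fun _ => ⟨Q, hQ, by omega⟩, fun _ => hT⟩
  · have hlt : ∑ P ∈ S, (t P - 1) ^ 2 < d ^ 2 - 3 * d + 3 := by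
      have hsm : ∀ P ∈ S, t P + 2 ≤ d := by
        intro P hP
        by_contra h
        exact hex ⟨P, ptS P hP, by omega⟩
      by_cases h3 : ∃ P ∈ S, 3 ≤ t P
      · obtain ⟨Q, hQ, hQ3⟩ := h3
        have lo := low Q hQ
        have hs := hsm Q hQ
        obtain ⟨a, ha⟩ := Nat.exists_eq_add_of_le hQ3
        obtain ⟨b, hb⟩ := Nat.exists_eq_add_of_le hs
        have e1 : t Q - 1 = a + 2 := by omega
        have e2 : d - t Q = b + 2 := by omega
        rw [e1, e2, ha] at lo
        have : 2 * d - 3 < a + 2 + (3 + a) * (b + 2) := by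
          have : (3 + a) * (b + 2) = 3 * b + 6 + a * b + 2 * a := by ring
          rw [this]
          have := Nat.zero_le (a * b)
          omega
        omega
      · push Not at h3
        have heq : ∑ P ∈ S, (t P - 1) ^ 2 = ∑ P ∈ S, (t P - 1) := by
          refine Finset.sum_congr rfl fun P hP => ?_
          have := t2 P hP
          have := h3 P hP
          have : t P - 1 = 1 := by omega
          rw [this]; rfl
        have hd4 : 4 ≤ d := by
          obtain ⟨L, hL, M, hM, hne⟩ := Finset.one_lt_card.1 (by omega : 1 < A.card)
          have hP := (memS _).2 ⟨L, hL, M, hM, hne, rfl⟩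
          have := t2 _ hP
          have := hsm _ hP
          omega
        have hbig : 2 * (2 * d - 3) < d * (d - 1) := by
          obtain ⟨k, rfl⟩ := Nat.exists_eq_add_of_le hd4
          have b : 2 * (4 + k) - 3 = 2 * k + 5 := by omega
          have c : 4 + k - 1 = k + 3 := by omega
          rw [b, c]; nlinarith
        omega
    exact ⟨hlt.le, fun h => absurd h hlt.ne, fun h => absurd h hex⟩

open Classical in
/-- Let `A` be an arrangement of `d ≥ 3` distinct lines in `ℙ²` over a
field `K` of characteristic zero, with global Tjurina number
`τ(A) = Σ_{P ∈ S(A)} (t_P − 1)²`.  If the `d` lines of `A` are not all concurrent (there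
is no point, i.e. 1-dimensional subspace, contained in all of them), then
`τ(A) ≤ d² − 3d + 3`, with equality iff some `d − 1` of the lines of `A` are concurrent
(but not all `d`, which is the standing assumption). -/
theorem stmt_11 {K V : Type*} [Field K] [CharZero K] [AddCommGroup V] [Module K V]
    [FiniteDimensional K V] {d : ℕ}
    (hV : Module.finrank K V = 3)
    (A : Finset (Submodule K V)) (hcard : A.card = d) (hd : 3 ≤ d)
    (hlines : ∀ L ∈ A, Module.finrank K L = 2)
    (hnotconc : ¬ ∃ P : Submodule K V, Module.finrank K P = 1 ∧ ∀ L ∈ A, P ≤ L) :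
    (∑ P ∈ ((A ×ˢ A).filter (fun p => p.1 ≠ p.2)).image (fun p => p.1 ⊓ p.2),
        ((A.filter (fun L => P ≤ L)).card - 1) ^ 2) ≤ d ^ 2 - 3 * d + 3 ∧
    ((∑ P ∈ ((A ×ˢ A).filter (fun p => p.1 ≠ p.2)).image (fun p => p.1 ⊓ p.2),
        ((A.filter (fun L => P ≤ L)).card - 1) ^ 2) = d ^ 2 - 3 * d + 3 ↔
      ∃ P : Submodule K V, Module.finrank K P = 1 ∧
        d - 1 ≤ (A.filter (fun L => P ≤ L)).card) := by
  have h1 : ∀ L ∈ A, ∀ M ∈ A, L ≠ M → Module.finrank K (L ⊓ M : Submodule K V) = 1 := by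
    intro L hL M hM hne
    have e := Submodule.finrank_sup_add_finrank_inf_eq L M
    have hl := hlines L hL
    have hm := hlines M hM
    have hle : Module.finrank K (L ⊔ M : Submodule K V) ≤ 3 := hV ▸ Submodule.finrank_le _
    have hlt : Module.finrank K (L ⊓ M : Submodule K V) < 2 := by
      by_contra hge
      push Not at hge
      have a : L ⊓ M = L := Submodule.eq_of_le_of_finrank_le inf_le_left (by omega)
      have b : L ⊓ M = M := Submodule.eq_of_le_of_finrank_le inf_le_right (by omega)
      exact hne (a.symm.trans b)
    omega
  refine comb_aux (fun P : Submodule K V => Module.finrank K P = 1) A hcard hd h1 ?_ hnotconc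
  intro P hP L hL M hM hne hPL hPM
  have hP : Module.finrank K P = 1 := hP
  exact Submodule.eq_of_le_of_finrank_le (le_inf hPL hPM) (by rw [hP, h1 L hL M hM hne])
end

section
/- Let K have characteristic zero and let f = ℓ₁⋯ℓ_d ∈ K[x₀,…,xₙ] be a product of d ≥ 2 pairwise non-proportional linear forms, defining a hyperplane arrangement A in ℙⁿ. Then the Jacobian ideal Jac(f) can be generated by two elements (equivalently, Jac(f) is a complete intersection) if and only if all the hyperplanes of A contain a common linear subspace of ℙⁿ of dimension n − 2, i.e. if and only if the linear forms ℓ₁,…,ℓ_d span a K-vector subspace of dimension at most 2 of the space of linear forms. -/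
open MvPolynomial

/-- A finite-dimensional subspace of dimension at most two is spanned by two vectors. -/
lemma exists_pair_span {K V : Type*} [Field K] [AddCommGroup V] [Module K V]
    (W : Submodule K V) [Module.Finite K W] (h : Module.finrank K W ≤ 2) :
    ∃ u v : V, W = Submodule.span K {u, v} := by
  let b := Module.finBasis K W
  let w : ℕ → V := fun k => if hk : k < Module.finrank K W then (b ⟨k, hk⟩ : V) else 0
  have hw : ∀ k, w k ∈ W := by
    intro k
    by_cases hk : k < Module.finrank K W
    · simp [w, hk]
    · simp [w, hk]
  refine ⟨w 0, w 1, le_antisymm ?_ ?_⟩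
  · intro x hx
    have hs := b.sum_repr ⟨x, hx⟩
    have hs' : x = ∑ i, b.repr ⟨x, hx⟩ i • (b i : V) := by
      have := congrArg W.subtype hs
      rw [map_sum] at this
      exact this.symm
    rw [hs']
    refine Submodule.sum_mem _ fun i _ => Submodule.smul_mem _ _ (Submodule.subset_span ?_)
    have hi : (b i : V) = w i := by simp [w]
    rw [hi]
    have : (i : ℕ) = 0 ∨ (i : ℕ) = 1 := by omega
    rcases this with h0 | h0 <;> simp [h0]
  · rw [Submodule.span_le]
    rintro x (rfl | rfl)
    · exact hw 0
    · exact hw 1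

/-- A family in the span of two vectors has a span of dimension at most two. -/
lemma finrank_le_two_of_mem {K V ι : Type*} [Field K] [AddCommGroup V] [Module K V]
    (x : ι → V) (u v : V) (h : ∀ i, x i ∈ Submodule.span K {u, v}) :
    Module.finrank K (Submodule.span K (Set.range x)) ≤ 2 := by
  classical
  have hle : Submodule.span K (Set.range x) ≤ Submodule.span K {u, v} := by
    rw [Submodule.span_le]
    rintro _ ⟨i, rfl⟩
    exact h i
  have : Module.Finite K (Submodule.span K ({u, v} : Set V)) :=
    Module.Finite.span_of_finite K (Set.toFinite _)
  refine (Submodule.finrank_mono hle).trans ?_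
  have := finrank_span_finset_le_card (R := K) ({u, v} : Finset V)
  rw [Set.finrank, Finset.coe_pair] at this
  exact this.trans Finset.card_le_two

/-- The degree `e` part of a multiple of a form of degree `e`. -/
lemma homComp_mul_of_hom {K σ : Type*} [Field K] {e : ℕ} {p : MvPolynomial σ K}
    (hp : p.IsHomogeneous e) (q : MvPolynomial σ K) :
    homogeneousComponent e (q * p) = coeff 0 q • p := by
  conv_lhs => rw [← sum_homogeneousComponent q, Finset.sum_mul, map_sum]
  rw [Finset.sum_eq_single 0]
  · rw [homogeneousComponent_zero, homogeneousComponent_C_mul, homogeneousComponent_eq_self hp,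
      smul_eq_C_mul]
  · intro b _ hb
    have hm : (homogeneousComponent b q * p).IsHomogeneous (b + e) :=
      (homogeneousComponent_isHomogeneous b q).mul hp
    rw [homogeneousComponent_of_mem hm, if_neg (by omega)]
  · intro h
    simp at h

lemma homComp_mul_of_mem {K σ : Type*} [Field K] {e : ℕ} {s : Set (MvPolynomial σ K)}
    (hs : ∀ p ∈ s, p.IsHomogeneous e) {p : MvPolynomial σ K} (hp : p ∈ Ideal.span s) :
    ∀ q : MvPolynomial σ K,
      homogeneousComponent e (q * p) = coeff 0 q • homogeneousComponent e p := by
  induction hp using Submodule.span_induction with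
  | mem x hx =>
    intro q
    rw [homComp_mul_of_hom (hs x hx), homogeneousComponent_eq_self (hs x hx)]
  | zero => intro q; simp
  | add x y _ _ hx hy => intro q; rw [mul_add, map_add, map_add, hx, hy, smul_add]
  | smul a x _ hx =>
    intro q
    rw [smul_eq_mul, ← mul_assoc, hx, hx, smul_smul]
    congr 1
    simp [← constantCoeff_eq]

lemma mem_span_pair_of_ideal {K σ ι : Type*} [Field K] {e : ℕ} (x : ι → MvPolynomial σ K)
    (hx : ∀ i, (x i).IsHomogeneous e) (g h : MvPolynomial σ K)
    (hI : Ideal.span (Set.range x) = Ideal.span {g, h}) (i : ι) :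
    x i ∈ Submodule.span K
      {homogeneousComponent e g, homogeneousComponent e h} := by
  have hs : ∀ p ∈ Set.range x, p.IsHomogeneous e := by
    rintro _ ⟨i, rfl⟩
    exact hx i
  have hg : g ∈ Ideal.span (Set.range x) := hI ▸ Ideal.subset_span (by simp)
  have hh : h ∈ Ideal.span (Set.range x) := hI ▸ Ideal.subset_span (by simp)
  have hxi : x i ∈ Ideal.span {g, h} := hI ▸ Ideal.subset_span ⟨i, rfl⟩
  obtain ⟨a, b, hab⟩ := Ideal.mem_span_pair.1 hxi
  rw [Submodule.mem_span_pair]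
  refine ⟨coeff 0 a, coeff 0 b, ?_⟩
  rw [← homComp_mul_of_mem hs hg, ← homComp_mul_of_mem hs hh, ← map_add, hab,
    homogeneousComponent_eq_self (hx i)]

lemma pderiv_finset_prod {K σ ι : Type*} [Field K] [DecidableEq ι] (i : σ)
    (L : ι → MvPolynomial σ K) (s : Finset ι) :
    pderiv i (∏ j ∈ s, L j) = ∑ j ∈ s, pderiv i (L j) * ∏ k ∈ s.erase j, L k := by
  induction s using Finset.induction_on with
  | empty => simp
  | insert a s ha ih =>
    rw [Finset.prod_insert ha, pderiv_mul, ih, Finset.sum_insert ha, Finset.erase_insert ha,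
      Finset.mul_sum]
    congr 1
    refine Finset.sum_congr rfl fun j hj => ?_
    have hja : a ≠ j := fun h => ha (h ▸ hj)
    rw [Finset.erase_insert_of_ne hja, Finset.prod_insert (by simp [ha])]
    ring

lemma prime_of_linear {K σ : Type*} [Field K] {p : MvPolynomial σ K}
    (hp : p.IsHomogeneous 1) (h0 : p ≠ 0) : Prime p := by
  refine (irreducible_of_totalDegree_eq_one (hp.totalDegree h0) ?_).prime
  intro x hx
  obtain ⟨m, hm⟩ := ne_zero_iff.1 h0
  exact isUnit_of_dvd_unit (hx m) (isUnit_iff_ne_zero.2 hm)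

lemma eq_smul_of_dvd {K σ : Type*} [Field K] {p q : MvPolynomial σ K}
    (hp : p.IsHomogeneous 1) (h0 : p ≠ 0) (hq : q.IsHomogeneous 1) (hq0 : q ≠ 0)
    (h : p ∣ q) : ∃ c : K, q = c • p := by
  obtain ⟨r, rfl⟩ := h
  have hr : r ≠ 0 := right_ne_zero_of_mul hq0
  have hd := hq.totalDegree hq0
  rw [totalDegree_mul_of_isDomain h0 hr, hp.totalDegree h0] at hd
  have hr0 : r.totalDegree = 0 := by omega
  rw [totalDegree_eq_zero_iff_eq_C] at hr0
  refine ⟨coeff 0 r, ?_⟩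
  rw [smul_eq_C_mul, ← hr0, mul_comm]

lemma linearIndependent_erase_prod {K σ : Type*} [Field K] {d : ℕ}
    (L : Fin d → MvPolynomial σ K)
    (hhom : ∀ i, (L i).IsHomogeneous 1) (hne : ∀ i, L i ≠ 0)
    (hprop : ∀ i j, i ≠ j → ∀ c : K, L i ≠ c • L j) :
    LinearIndependent K (fun j => ∏ k ∈ Finset.univ.erase j, L k) := by
  rw [Fintype.linearIndependent_iff]
  intro a ha k
  by_contra hk
  have hpr := prime_of_linear (hhom k) (hne k)
  have hdvd : L k ∣ a k • ∏ l ∈ Finset.univ.erase k, L l := by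
    rw [← Finset.add_sum_erase _ _ (Finset.mem_univ k)] at ha
    rw [eq_neg_of_add_eq_zero_left ha, dvd_neg]
    refine Finset.dvd_sum fun j hj => ?_
    rw [smul_eq_C_mul]
    refine Dvd.dvd.mul_left (Finset.dvd_prod_of_mem L ?_) _
    simp only [Finset.mem_erase, Finset.mem_univ, and_true] at hj ⊢
    exact hj.symm
  have hdvd' : L k ∣ ∏ l ∈ Finset.univ.erase k, L l := by
    have := hdvd.mul_left (C (a k)⁻¹)
    rwa [smul_eq_C_mul, ← mul_assoc, ← C_mul, inv_mul_cancel₀ hk, C_1, one_mul] at this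
  obtain ⟨j, hj, hkj⟩ := (hpr.dvd_finsetProd_iff _).1 hdvd'
  obtain ⟨c, hc⟩ := eq_smul_of_dvd (hhom k) (hne k) (hhom j) (hne j) hkj
  exact hprop j k (Finset.ne_of_mem_erase hj) c hc

lemma finrank_span_combination {K V ι κ : Type*} [Field K] [AddCommGroup V] [Module K V]
    [Fintype ι] (b : ι → V) (hb : LinearIndependent K b) (A : κ → ι → K) :
    Module.finrank K (Submodule.span K (Set.range fun k => ∑ i, A k i • b i)) =
      Module.finrank K (Submodule.span K (Set.range A)) := by
  have hinj : Function.Injective (Fintype.linearCombination K b) :=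
    hb.fintypeLinearCombination_injective
  have : Set.range (fun k => ∑ i, A k i • b i) =
      Fintype.linearCombination K b '' Set.range A := by
    rw [← Set.range_comp]
    rfl
  rw [this, ← Submodule.map_span]
  exact (Submodule.equivMapOfInjective _ hinj _).finrank_eq.symm

/-- Let `K` have characteristic zero and let `f = ℓ₁⋯ℓ_d` be a product
of `d ≥ 2` pairwise non-proportional linear forms `L i` in `K[x₀,…,xₙ]`, defining a
hyperplane arrangement `A` in `ℙⁿ`.  Then the Jacobian ideal `Jac(f)` can be generated by
two elements (equivalently, `Jac(f)` is a complete intersection) iff all the hyperplanes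
of `A` contain a common linear subspace of `ℙⁿ` of dimension `n − 2`, i.e. iff the linear
forms `L i` span a `K`-subspace of dimension at most `2` (they all lie in the span of two
polynomials). -/
theorem stmt_13 {K : Type*} [Field K] [CharZero K] {n d : ℕ} (hn : 1 ≤ n) (hd : 2 ≤ d)
    (L : Fin d → MvPolynomial (Fin (n + 1)) K)
    (hhom : ∀ i, (L i).IsHomogeneous 1) (hne : ∀ i, L i ≠ 0)
    (hprop : ∀ i j, i ≠ j → ∀ c : K, L i ≠ c • L j) :
    (∃ g h : MvPolynomial (Fin (n + 1)) K,
        jacobianIdeal (∏ i, L i) = Ideal.span {g, h}) ↔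
      ∃ u v : MvPolynomial (Fin (n + 1)) K,
        ∀ i, L i ∈ Submodule.span K ({u, v} : Set (MvPolynomial (Fin (n + 1)) K)) := by
  classical
  have hc : ∀ j, ∃ c : Fin (n + 1) → K, ∑ i, c i • X i = L j := by
    intro j
    have := (mem_homogeneousSubmodule 1 (L j)).2 (hhom j)
    rw [homogeneousSubmodule_one_eq_span_X] at this
    exact (Submodule.mem_span_range_iff_exists_fun K).1 this
  choose c hc using hc
  have hpd : ∀ i j, pderiv i (L j) = C (c j i) := by
    intro i j
    rw [← hc j, map_sum, Finset.sum_eq_single i]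
    · simp [smul_eq_C_mul]
    · intro b _ hb
      simp [pderiv_X_of_ne hb]
    · simp
  have hf : ∀ i, pderiv i (∏ j, L j) = ∑ j, c j i • ∏ k ∈ Finset.univ.erase j, L k := by
    intro i
    rw [pderiv_finset_prod]
    exact Finset.sum_congr rfl fun j _ => by rw [hpd, smul_eq_C_mul]
  have hfh : ∀ i, (pderiv i (∏ j, L j)).IsHomogeneous (d - 1) := by
    intro i
    rw [hf]
    refine IsHomogeneous.sum _ _ _ fun j _ => ?_
    rw [smul_eq_C_mul]
    refine IsHomogeneous.C_mul ?_ _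
    have := IsHomogeneous.prod (Finset.univ.erase j) L (fun _ => 1) fun k _ => hhom k
    simpa using this
  have hX : LinearIndependent K (X : Fin (n + 1) → MvPolynomial (Fin (n + 1)) K) :=
    linearIndependent_X _ _
  have hrank : Module.finrank K (Submodule.span K (Set.range fun i => pderiv i (∏ j, L j))) =
      Module.finrank K (Submodule.span K (Set.range L)) := by
    have h1 := finrank_span_combination _ (linearIndependent_erase_prod L hhom hne hprop)
      (fun i j => c j i)
    have h2 := finrank_span_combination _ hX c
    have h2' : (fun k => ∑ i, c k i • X i) = L := funext hc
    rw [h2'] at h2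
    have h1' := funext hf
    rw [h1', h1]
    refine Eq.trans ?_ h2.symm
    have h3 := Matrix.rank_eq_finrank_span_cols (Matrix.of c)
    have h4 := Matrix.rank_eq_finrank_span_row (Matrix.of c)
    exact h3.symm.trans h4
  have : Module.Finite K (Submodule.span K (Set.range fun i => pderiv i (∏ j, L j))) :=
    Module.Finite.span_of_finite K (Set.finite_range _)
  have : Module.Finite K (Submodule.span K (Set.range L)) :=
    Module.Finite.span_of_finite K (Set.finite_range _)
  constructor
  · rintro ⟨g, h, hgh⟩
    have h2 := finrank_le_two_of_mem _ _ _ (mem_span_pair_of_ideal _ hfh g h hgh)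
    rw [hrank] at h2
    obtain ⟨u, v, huv⟩ := exists_pair_span _ h2
    exact ⟨u, v, fun i => huv ▸ Submodule.subset_span ⟨i, rfl⟩⟩
  · rintro ⟨u, v, huv⟩
    have h2 := finrank_le_two_of_mem _ _ _ huv
    rw [← hrank] at h2
    obtain ⟨g, h, hgh⟩ := exists_pair_span _ h2
    refine ⟨g, h, ?_⟩
    have := congrArg (fun W : Submodule K (MvPolynomial (Fin (n + 1)) K) =>
      Ideal.span (W : Set (MvPolynomial (Fin (n + 1)) K))) hgh
    simp only [Ideal.span, Submodule.span_span_of_tower] at this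
    exact this
end
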